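/- arXiv:1005.3876 — 6 statements merged into one kernel-verified Lean document; each statement's English description precedes it below -/
import Mathlib

section
/- Let G be a finite group and X a finite set of subgroups of G with G ∈ X, regarded as a poset under inclusion (with maximum element G) with Möbius function μ_X. Let C_X be the set of all cosets xH with x ∈ G and H ∈ X, H ≠ G, ordered by inclusion, and for each k ≥ 1 let c_k be the number of k-element subsets of C_X that are totally ordered by inclusion. Then Σ_{H ∈ X} μ_X(H,G)·|G:H| = 1 − Σ_{k ≥ 1} (−1)^{k−1}·c_k. -/
open scoped Classical Pointwise

/-!
Write `χ̃` for the reduced Euler characteristic of the order complex of a finite poset. Sorting the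
nonempty chains of `P` by their least element gives `χ̃(P) = -1 - ∑ p, χ̃(P_{>p})`; sorting them by
their greatest element turns the Möbius recursion into P. Hall's theorem `μ(a, b) = χ̃((a, b))`.
In the coset poset `C`, the map `K ↦ xK` identifies the members of `X` strictly between `H` and `G`
with the cosets strictly above `xH`, whose reduced Euler characteristic is therefore `μ(H, G)`. As
there are `|G : H|` cosets of `H`, sorting by least elements yields
`χ̃(C) = -1 - ∑_{H ≠ G} |G : H| μ(H, G)`.
-/

section EulerCharacteristic

variable {α β : Type*} [PartialOrder α] [PartialOrder β]

theorem isChain_le_iff_forall_le_or_ge {S : Set α} :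
    IsChain (· ≤ ·) S ↔ ∀ a ∈ S, ∀ b ∈ S, a ≤ b ∨ b ≤ a :=
  ⟨fun hS _ ha _ hb => hS.total ha hb, fun hS a ha b hb _ => hS a ha b hb⟩

/-- The chains of a finite subset `A` of a poset, i.e. the faces of its order complex. The empty
chain is included. -/
noncomputable def chains (A : Finset α) : Finset (Finset α) :=
  {S ∈ A.powerset | IsChain (· ≤ ·) (S : Set α)}

theorem mem_chains {A S : Finset α} : S ∈ chains A ↔ S ⊆ A ∧ IsChain (· ≤ ·) (S : Set α) := by
  simp [chains]

theorem empty_mem_chains (A : Finset α) : ∅ ∈ chains A := by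
  simp [mem_chains]

/-- The reduced Euler characteristic of the order complex of `A`. A chain with `k` elements is a
simplex of dimension `k - 1`; the sign is `(-1) ^ (k + 1)` so that `k = 0` needs no truncated
subtraction. -/
noncomputable def reducedEulerChar (A : Finset α) : ℤ :=
  ∑ S ∈ chains A, (-1) ^ (S.card + 1)

theorem reducedEulerChar_eq_sum_erase_empty (A : Finset α) :
    reducedEulerChar A = -1 + ∑ S ∈ (chains A).erase ∅, (-1) ^ (S.card + 1) := by
  rw [reducedEulerChar, ← Finset.add_sum_erase _ _ (empty_mem_chains A)]
  simp

theorem reducedEulerChar_eq_tsum (A : Finset α) :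
    reducedEulerChar A = -1 + ∑' k : ℕ, (-1 : ℤ) ^ k * {S ∈ chains A | S.card = k + 1}.card := by
  have hcard_pos : ∀ S ∈ (chains A).erase ∅, 0 < S.card := fun S hS =>
    Finset.card_pos.2 (Finset.nonempty_iff_ne_empty.2 (Finset.ne_of_mem_erase hS))
  have hcard_le : ∀ S ∈ chains A, S.card ≤ A.card := fun S hS =>
    Finset.card_le_card (mem_chains.1 hS).1
  have hfiber : ∀ k, ∑ S ∈ (chains A).erase ∅ with S.card - 1 = k, (-1 : ℤ) ^ (S.card + 1)
      = (-1) ^ k * {S ∈ chains A | S.card = k + 1}.card := by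
    intro k
    have hfilter : {S ∈ (chains A).erase ∅ | S.card - 1 = k}
        = {S ∈ chains A | S.card = k + 1} := by
      ext S
      simp only [Finset.mem_filter, Finset.mem_erase, ← Finset.card_ne_zero.trans
        Finset.nonempty_iff_ne_empty]
      lia
    rw [hfilter, Finset.sum_congr rfl fun S hS => by rw [(Finset.mem_filter.1 hS).2]]
    simp [pow_succ, mul_comm]
  rw [reducedEulerChar_eq_sum_erase_empty, tsum_eq_sum (s := Finset.range A.card),
    ← Finset.sum_fiberwise_of_maps_to (g := fun S => S.card - 1) (t := Finset.range A.card)]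
  · simp only [hfiber]
  · intro S hS
    have := hcard_pos S hS
    have := hcard_le S (Finset.mem_of_mem_erase hS)
    exact Finset.mem_range.2 (by lia)
  · intro k hk
    have hempty : {S ∈ chains A | S.card = k + 1} = ∅ := by
      refine Finset.filter_eq_empty_iff.2 fun S hS hSk => hk (Finset.mem_range.2 ?_)
      have := hcard_le S hS
      lia
    simp [hempty]

theorem chains_map (f : α ↪ β) (hf : ∀ a b, f a ≤ f b ∨ f b ≤ f a ↔ a ≤ b ∨ b ≤ a)
    (A : Finset α) : chains (A.map f) = (chains A).map (Finset.mapEmbedding f).toEmbedding := by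
  have hchain : ∀ S : Finset α,
      IsChain (· ≤ ·) (S.map f : Set β) ↔ IsChain (· ≤ ·) (S : Set α) := fun S => by
    simp only [isChain_le_iff_forall_le_or_ge, Finset.coe_map, Set.forall_mem_image, hf]
  ext T
  simp only [mem_chains, Finset.mem_map, Finset.subset_map_iff]
  constructor
  · rintro ⟨⟨S, hSA, rfl⟩, hS⟩
    exact ⟨S, ⟨hSA, (hchain S).1 hS⟩, rfl⟩
  · rintro ⟨S, ⟨hSA, hS⟩, rfl⟩
    exact ⟨⟨S, hSA, rfl⟩, (hchain S).2 hS⟩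

theorem reducedEulerChar_map (f : α ↪ β) (hf : ∀ a b, f a ≤ f b ∨ f b ≤ f a ↔ a ≤ b ∨ b ≤ a)
    (A : Finset α) : reducedEulerChar (A.map f) = reducedEulerChar A := by
  simp [reducedEulerChar, chains_map f hf]

theorem reducedEulerChar_map_orderEmbedding (f : α ↪o β) (A : Finset α) :
    reducedEulerChar (A.map f.toEmbedding) = reducedEulerChar A :=
  reducedEulerChar_map f.toEmbedding (by simp) A

theorem reducedEulerChar_map_toDual (A : Finset α) :
    reducedEulerChar (A.map OrderDual.toDual.toEmbedding) = reducedEulerChar A :=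
  reducedEulerChar_map _ (fun _ _ => or_comm) A

/-- The chains of `A` whose least element is `a`. The nonempty chains of `A` are partitioned into
these classes. -/
noncomputable def chainsFrom (A : Finset α) (a : α) : Finset (Finset α) :=
  {S ∈ chains A | IsLeast (S : Set α) a}

theorem mem_chainsFrom {A S : Finset α} {a : α} :
    S ∈ chainsFrom A a ↔ S ∈ chains A ∧ IsLeast (S : Set α) a :=
  Finset.mem_filter

theorem exists_isLeast_of_isChain {S : Finset α} (hS : IsChain (· ≤ ·) (S : Set α))
    (hne : S.Nonempty) : ∃ a, IsLeast (S : Set α) a := by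
  obtain ⟨a, ha⟩ := S.exists_minimal hne
  exact ⟨a, ha.1, fun b hb => (hS.total ha.1 hb).elim id fun hba => ha.2 hb hba⟩

theorem erase_mem_chains_filter_lt {A S : Finset α} {a : α} (hS : S ∈ chainsFrom A a) :
    S.erase a ∈ chains {b ∈ A | a < b} := by
  obtain ⟨hS, ha⟩ := mem_chainsFrom.1 hS
  obtain ⟨hSA, hchain⟩ := mem_chains.1 hS
  refine mem_chains.2 ⟨fun b hb => ?_, hchain.mono (by simp)⟩
  obtain ⟨hba, hb⟩ := Finset.mem_erase.1 hb
  exact Finset.mem_filter.2 ⟨hSA hb, (ha.2 hb).lt_of_ne' hba⟩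

theorem lt_of_mem_chains_filter_lt {A S : Finset α} {a b : α} (hS : S ∈ chains {b ∈ A | a < b})
    (hb : b ∈ S) : a < b :=
  (Finset.mem_filter.1 ((mem_chains.1 hS).1 hb)).2

theorem notMem_of_mem_chains_filter_lt {A S : Finset α} {a : α}
    (hS : S ∈ chains {b ∈ A | a < b}) : a ∉ S :=
  fun ha => (lt_of_mem_chains_filter_lt hS ha).false

theorem insert_mem_chainsFrom {A S : Finset α} {a : α} (ha : a ∈ A)
    (hS : S ∈ chains {b ∈ A | a < b}) : insert a S ∈ chainsFrom A a := by
  obtain ⟨hSA, hchain⟩ := mem_chains.1 hS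
  have hle : ∀ b ∈ S, a ≤ b := fun b hb => (lt_of_mem_chains_filter_lt hS hb).le
  refine mem_chainsFrom.2 ⟨mem_chains.2 ⟨?_, ?_⟩, by simp, ?_⟩
  · exact Finset.insert_subset ha (hSA.trans (Finset.filter_subset _ _))
  · rw [Finset.coe_insert]
    exact hchain.insert fun b hb _ => Or.inl (hle b hb)
  · simpa [mem_lowerBounds] using hle

theorem sum_chainsFrom {A : Finset α} {a : α} (ha : a ∈ A) :
    ∑ S ∈ chainsFrom A a, (-1 : ℤ) ^ (S.card + 1) = -reducedEulerChar {b ∈ A | a < b} := by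
  rw [reducedEulerChar, ← Finset.sum_neg_distrib]
  symm
  refine Finset.sum_nbij' (insert a) (fun S => S.erase a) (fun S hS => insert_mem_chainsFrom ha hS)
    (fun S hS => erase_mem_chains_filter_lt hS)
    (fun S hS => Finset.erase_insert (notMem_of_mem_chains_filter_lt hS))
    (fun S hS => Finset.insert_erase (mem_chainsFrom.1 hS).2.1) (fun S hS => ?_)
  simp [Finset.card_insert_of_notMem (notMem_of_mem_chains_filter_lt hS), pow_succ]

theorem chains_erase_empty_eq_biUnion (A : Finset α) :
    (chains A).erase ∅ = A.biUnion (chainsFrom A) := by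
  ext S
  simp only [Finset.mem_erase, Finset.mem_biUnion, mem_chainsFrom]
  constructor
  · rintro ⟨hne, hS⟩
    obtain ⟨hSA, hchain⟩ := mem_chains.1 hS
    obtain ⟨a, ha⟩ := exists_isLeast_of_isChain hchain (Finset.nonempty_iff_ne_empty.2 hne)
    exact ⟨a, hSA ha.1, hS, ha⟩
  · rintro ⟨a, -, hS, ha⟩
    exact ⟨Finset.ne_empty_of_mem ha.1, hS⟩

theorem pairwiseDisjoint_chainsFrom (A : Finset α) (s : Set α) :
    s.PairwiseDisjoint (chainsFrom A) :=
  fun _ _ _ _ hab => Finset.disjoint_filter.2 fun _ _ ha hb => hab (ha.unique hb)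

theorem reducedEulerChar_eq_sum_filter_gt (A : Finset α) :
    reducedEulerChar A = -1 - ∑ a ∈ A, reducedEulerChar {b ∈ A | a < b} := by
  rw [reducedEulerChar_eq_sum_erase_empty, chains_erase_empty_eq_biUnion,
    Finset.sum_biUnion (pairwiseDisjoint_chainsFrom A _),
    Finset.sum_congr rfl fun a => sum_chainsFrom, Finset.sum_neg_distrib, sub_eq_add_neg]

theorem reducedEulerChar_eq_sum_filter_lt (A : Finset α) :
    reducedEulerChar A = -1 - ∑ a ∈ A, reducedEulerChar {b ∈ A | b < a} := by
  rw [← reducedEulerChar_map_toDual, reducedEulerChar_eq_sum_filter_gt, Finset.sum_map]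
  simp only [Finset.filter_map, reducedEulerChar_map_toDual]
  rfl

/-- **P. Hall's theorem.** -/
theorem mobius_eq_reducedEulerChar_Ioo {X : Finset α} {mu : α → α → ℤ} {a b : α} (ha : a ∈ X)
    (hmu_self : mu a a = 1)
    (hmu_rec : ∀ c ∈ X, a < c → mu a c = -∑ u ∈ X with a ≤ u ∧ u < c, mu a u)
    (hb : b ∈ X) (hab : a < b) :
    mu a b = reducedEulerChar {u ∈ X | a < u ∧ u < b} := by
  refine (X.finite_toSet.wellFoundedOn (r := (· < ·))).induction
    (P := fun b => a < b → mu a b = reducedEulerChar {u ∈ X | a < u ∧ u < b}) hb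
    (fun b hb ih hab => ?_) hab
  have hIco : {u ∈ X | a ≤ u ∧ u < b} = insert a {u ∈ X | a < u ∧ u < b} := by
    ext u
    rcases eq_or_ne u a with rfl | hua
    · simp [ha, hab]
    · simp [hua, hua.symm.le_iff_lt]
  have hterm : ∀ u ∈ ({u ∈ X | a < u ∧ u < b} : Finset α),
      mu a u = reducedEulerChar {v ∈ ({u ∈ X | a < u ∧ u < b} : Finset α) | v < u} := by
    intro u hu
    obtain ⟨huX, hau, hub⟩ := Finset.mem_filter.1 hu
    rw [ih u huX hub hau, Finset.filter_filter]
    congr 1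
    grind
  rw [hmu_rec b hb hab, hIco, Finset.sum_insert (by simp), hmu_self,
    reducedEulerChar_eq_sum_filter_lt, Finset.sum_congr rfl hterm]
  ring

end EulerCharacteristic

section Cosets

variable {G : Type*} [Group G]

/-- The left cosets in `G` of the subgroups belonging to `Y`; ordered by inclusion, they form the
coset poset of `Y`. -/
def leftCosets (Y : Set (Subgroup G)) : Set (Set G) :=
  ⋃ H ∈ Y, MulAction.orbit G (H : Set G)

theorem mem_leftCosets {Y : Set (Subgroup G)} {D : Set G} :
    D ∈ leftCosets Y ↔ ∃ H ∈ Y, ∃ x : G, x • (H : Set G) = D := by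
  simp [leftCosets, MulAction.mem_orbit_iff]

theorem ncard_orbit_subgroup (H : Subgroup G) :
    (MulAction.orbit G (H : Set G)).ncard = H.index := by
  rw [← MulAction.index_stabilizer, MulAction.stabilizer_subgroup]

theorem finite_leftCosets {Y : Set (Subgroup G)} (hY : Y.Finite)
    (hindex : ∀ H ∈ Y, H.FiniteIndex) : (leftCosets Y).Finite :=
  hY.biUnion fun H hH => Set.finite_of_ncard_ne_zero <| by
    rw [ncard_orbit_subgroup]
    exact (hindex H hH).index_ne_zero

/-- The order embedding `K ↦ xK` of the subgroups of `G` into the subsets of `G`. It carries the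
subgroups above `H` to the cosets above `xH`. -/
def leftCosetEmbedding (x : G) : Subgroup G ↪o Set G :=
  OrderEmbedding.ofMapLEIff (fun K => x • (K : Set G)) fun _ _ => by simp

theorem leftCosetEmbedding_apply (x : G) (K : Subgroup G) :
    leftCosetEmbedding x K = x • (K : Set G) := rfl

theorem leftCoset_eq_leftCoset_of_subset {x y : G} {H K : Subgroup G}
    (h : x • (H : Set G) ⊆ y • (K : Set G)) : y • (K : Set G) = x • (K : Set G) := by
  have hx : x ∈ y • (K : Set G) := h (mem_own_leftCoset H.toSubmonoid x)
  exact (leftCoset_eq_iff K).2 (by simpa [mem_leftCoset_iff] using hx)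

theorem subgroup_eq_of_leftCoset_eq {x y : G} {H K : Subgroup G}
    (h : x • (H : Set G) = y • (K : Set G)) : H = K :=
  (leftCosetEmbedding x).injective (h.trans (leftCoset_eq_leftCoset_of_subset h.subset))

theorem sum_leftCosets {Y : Finset (Subgroup G)} {C : Finset (Set G)}
    (hC : (C : Set (Set G)) = leftCosets Y) {R : Type*} [Semiring R] {f : Set G → R}
    {g : Subgroup G → R} (hfg : ∀ H ∈ Y, ∀ x : G, f (x • (H : Set G)) = g H) :
    ∑ D ∈ C, f D = ∑ H ∈ Y, H.index * g H := by
  have hmem : ∀ D, D ∈ C ↔ ∃ H ∈ Y, D ∈ MulAction.orbit G (H : Set G) := fun D =>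
    (Set.ext_iff.1 hC D).trans mem_leftCosets
  have hunion : C = Y.biUnion fun H => {D ∈ C | D ∈ MulAction.orbit G (H : Set G)} := by
    ext D
    simp only [Finset.mem_biUnion, Finset.mem_filter, hmem]
    grind
  have hdisj : (Y : Set (Subgroup G)).PairwiseDisjoint
      fun H => {D ∈ C | D ∈ MulAction.orbit G (H : Set G)} := by
    refine fun H _ K _ hHK => Finset.disjoint_filter.2 ?_
    rintro _ _ ⟨x, rfl⟩ ⟨y, hy⟩
    exact hHK (subgroup_eq_of_leftCoset_eq hy.symm)
  have hcard : ∀ H ∈ Y, {D ∈ C | D ∈ MulAction.orbit G (H : Set G)}.card = H.index := by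
    intro H hH
    rw [← ncard_orbit_subgroup, ← Set.ncard_coe_finset]
    congr 1
    ext D
    simpa [hmem] using fun hD => ⟨H, hH, hD⟩
  rw [hunion, Finset.sum_biUnion hdisj]
  refine Finset.sum_congr rfl fun H hH => ?_
  rw [← hcard H hH, ← nsmul_eq_mul]
  refine Finset.sum_eq_card_nsmul fun D hD => ?_
  obtain ⟨x, rfl⟩ := (Finset.mem_filter.1 hD).2
  exact hfg H hH x

theorem filter_leftCoset_lt_eq_map {Y : Finset (Subgroup G)} {C : Finset (Set G)}
    (hC : (C : Set (Set G)) = leftCosets Y) (x : G) (H : Subgroup G) :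
    C.filter (x • (H : Set G) < ·)
      = (Y.filter (H < ·)).map (leftCosetEmbedding x).toEmbedding := by
  ext D
  have hmem : D ∈ C ↔ D ∈ leftCosets Y := Set.ext_iff.1 hC D
  simp only [Finset.mem_filter, Finset.mem_map, RelEmbedding.coe_toEmbedding, hmem,
    mem_leftCosets, Finset.mem_coe, leftCosetEmbedding_apply]
  constructor
  · rintro ⟨⟨K, hK, y, rfl⟩, hlt⟩
    have hyx : y • (K : Set G) = x • (K : Set G) := leftCoset_eq_leftCoset_of_subset hlt.le
    rw [hyx] at hlt
    exact ⟨K, ⟨hK, (leftCosetEmbedding x).lt_iff_lt.1 hlt⟩, hyx.symm⟩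
  · rintro ⟨K, ⟨hK, hHK⟩, rfl⟩
    exact ⟨⟨K, hK, x, rfl⟩, (leftCosetEmbedding x).lt_iff_lt.2 hHK⟩

theorem reducedEulerChar_leftCosets {Y : Finset (Subgroup G)} {C : Finset (Set G)}
    (hC : (C : Set (Set G)) = leftCosets Y) :
    reducedEulerChar C = -1 - ∑ H ∈ Y, H.index * reducedEulerChar {K ∈ Y | H < K} := by
  rw [reducedEulerChar_eq_sum_filter_gt, sum_leftCosets hC fun H _ x => by
    rw [filter_leftCoset_lt_eq_map hC, reducedEulerChar_map_orderEmbedding]]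

theorem sum_mobius_mul_index_eq_neg_reducedEulerChar {X : Finset (Subgroup G)} (hX : ⊤ ∈ X)
    {mu : Subgroup G → Subgroup G → ℤ} (hmu_refl : ∀ H ∈ X, mu H H = 1)
    (hmu_rec : ∀ A ∈ X, ∀ B ∈ X, A < B →
      mu A B = -∑ U ∈ X with A ≤ U ∧ U < B, mu A U)
    {C : Finset (Set G)} (hC : (C : Set (Set G)) = leftCosets (X.erase ⊤)) :
    ∑ H ∈ X, mu H ⊤ * (H.index : ℤ) = -reducedEulerChar C := by
  have hmu : ∀ H ∈ X.erase ⊤, mu H ⊤ = reducedEulerChar {K ∈ X.erase ⊤ | H < K} := by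
    intro H hH
    obtain ⟨hHtop, hHX⟩ := Finset.mem_erase.1 hH
    rw [mobius_eq_reducedEulerChar_Ioo hHX (hmu_refl H hHX) (hmu_rec H hHX) hX hHtop.lt_top]
    congr 1
    ext K
    simp only [Finset.mem_filter, Finset.mem_erase, lt_top_iff_ne_top]
    tauto
  rw [← Finset.add_sum_erase X _ hX, hmu_refl ⊤ hX, Subgroup.index_top, Nat.cast_one, mul_one,
    reducedEulerChar_leftCosets hC, neg_sub, sub_neg_eq_add, add_comm]
  exact congrArg (· + 1) (Finset.sum_congr rfl fun H hH => by rw [hmu H hH, mul_comm])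

end Cosets

theorem stmt_1_general {G : Type*} [Group G]
    (X : Finset (Subgroup G)) (hindex : ∀ H ∈ X, H.FiniteIndex) (hX : ⊤ ∈ X)
    (mu : Subgroup G → Subgroup G → ℤ)
    (hmu_refl : ∀ H ∈ X, mu H H = 1)
    (hmu_rec : ∀ A ∈ X, ∀ B ∈ X, A < B →
      mu A B = -∑ U ∈ X.filter (fun U : Subgroup G => A ≤ U ∧ U < B), mu A U)
    (CX : Set (Set G))
    (hCX : CX = {C : Set G | ∃ (x : G) (H : Subgroup G), H ∈ X ∧ H ≠ ⊤ ∧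
      C = x • (H : Set G)})
    (c : ℕ → ℕ)
    (hc : ∀ k : ℕ, c k = Nat.card {S : Finset (Set G) //
        S.card = k ∧ ↑S ⊆ CX ∧ ∀ a ∈ S, ∀ b ∈ S, a ⊆ b ∨ b ⊆ a}) :
    ∑ H ∈ X, mu H ⊤ * (H.index : ℤ)
      = 1 - ∑' k : ℕ, (-1 : ℤ) ^ k * c (k + 1) := by
  have hCX_eq : CX = leftCosets (X.erase ⊤) := by
    ext D
    simp only [hCX, mem_leftCosets, Set.mem_ofPred_eq, Finset.coe_erase]
    grind
  have hCX_fin : CX.Finite := hCX_eq ▸ finite_leftCosets (X.erase ⊤).finite_toSet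
    fun H hH => hindex H (Finset.mem_of_mem_erase hH)
  obtain ⟨C, rfl⟩ := hCX_fin.exists_finset_coe
  have hc_eq : ∀ k, c k = {S ∈ chains C | S.card = k}.card := fun k => by
    rw [hc, Nat.subtype_card]
    intro S
    rw [Finset.mem_filter, mem_chains, isChain_le_iff_forall_le_or_ge, and_comm, Finset.coe_subset]
    rfl
  rw [sum_mobius_mul_index_eq_neg_reducedEulerChar hX hmu_refl hmu_rec hCX_eq,
    reducedEulerChar_eq_tsum]
  simp only [hc_eq]
  ring

/-- Let `G` be a finite group and `X` a finite set of subgroups of `G`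
containing `G`, regarded as a poset under inclusion with Möbius function `mu`.  Let `CX`
be the collection of all cosets `xH` with `H ∈ X`, `H ≠ G`, and for `k ≥ 1` let `c k` be
the number of `k`-element subsets of `CX` totally ordered by inclusion (the `(k-1)`-chains
of the coset poset).  Then `∑_{H ∈ X} μ_X(H,G)·|G:H| = 1 - ∑_{k ≥ 1} (-1)^{k-1}·c_k`. -/
theorem stmt_1 {G : Type*} [Group G] [Fintype G]
    (X : Finset (Subgroup G)) (hX : ⊤ ∈ X)
    (mu : Subgroup G → Subgroup G → ℤ)
    (hmu_refl : ∀ H ∈ X, mu H H = 1)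
    (hmu_rec : ∀ A ∈ X, ∀ B ∈ X, A < B →
      mu A B = -∑ U ∈ X.filter (fun U : Subgroup G => A ≤ U ∧ U < B), mu A U)
    (CX : Set (Set G))
    (hCX : CX = {C : Set G | ∃ (x : G) (H : Subgroup G), H ∈ X ∧ H ≠ ⊤ ∧
      C = x • (H : Set G)})
    (c : ℕ → ℕ)
    (hc : ∀ k : ℕ, c k = Nat.card {S : Finset (Set G) //
        S.card = k ∧ ↑S ⊆ CX ∧ ∀ a ∈ S, ∀ b ∈ S, a ⊆ b ∨ b ⊆ a}) :
    ∑ H ∈ X, mu H ⊤ * (H.index : ℤ)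
      = 1 - ∑' k : ℕ, (-1 : ℤ) ^ k * c (k + 1) := by
  exact stmt_1_general X (fun _ _ => inferInstance) hX mu hmu_refl hmu_rec CX hCX c hc
end

section
/- Let p be a prime number greater than 3, set q = (p−1)/2 and r = (p+1)/2, and let G = PSL(2, F_p) be the projective special linear group of 2×2 matrices over the field with p elements (so |G| = 2pqr). Then for every integer s ≥ 1, the number of commuting s-tuples in G satisfies |Hom(ℤ^s, G)| = (p+1)·p^s + pr·q^s + pq·r^s + (pqr/6)·4^s − (pqr/2)·2^s − (p + pr + pq − pqr/3). -/
/-!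
Let `n` be the order of the field. The centralizer in `SL₂` of a nonscalar matrix consists of the
elements `u + v x` of norm one, where `x` is the nonzero traceless matrix, unique up to scaling,
that commutes with it; it is a conic with `2n`, `n - 1` or `n + 1` points according to the quadratic
character of `-det x`. Commuting tuples of `SL₂` with a noncentral entry are therefore counted by
the lines of traceless matrices. Commuting tuples of `PSL₂` lift to tuples of `SL₂` commuting up to
sign, and such a tuple that does not commute lies in the quaternion group generated by any of its
anticommuting pairs. That group contains exactly 24 anticommuting pairs, while `SL₂` contains
`n (n² - 1)` of them.
-/

open Finset

local notation "M₂" => Matrix (Fin 2) (Fin 2)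

local notation "SL₂" => Matrix.SpecialLinearGroup (Fin 2)

lemma card_filter_prod_eq_sum {α β : Type*} [Fintype α] [Fintype β] (p : α × β → Prop)
    [DecidablePred p] : #{x : α × β | p x} = ∑ a, #{b | p (a, b)} := by
  simp only [card_filter, Fintype.sum_prod_type]

section QuadraticCharacter

variable {F : Type*} [Field F] [Fintype F] [DecidableEq F]

lemma card_filter_sq_eq (hF : ringChar F ≠ 2) (d : F) :
    (#{a : F | a ^ 2 = d} : ℤ) = 1 + quadraticChar F d := by
  rw [add_comm, ← quadraticChar_card_sqrts hF d, Set.toFinset_ofPred]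

lemma card_filter_mul_eq (m : F) :
    (#{x : F × F | x.1 * x.2 = m} : ℤ) =
      Fintype.card F - 1 + if m = 0 then (Fintype.card F : ℤ) else 0 := by
  have hfiber (b : F) (hb : b ∈ univ.erase 0) : #{c : F | b * c = m} = 1 := by
    rw [card_eq_one]
    exact ⟨m / b, by ext c; simp [eq_div_iff (ne_of_mem_erase hb), mul_comm]⟩
  rw [card_filter_prod_eq_sum, ← sum_erase_add _ _ (mem_univ 0), sum_congr rfl hfiber, sum_const,
    smul_eq_mul, mul_one, Nat.cast_add, cast_card_erase_of_mem (mem_univ _), card_univ]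
  simp only [zero_mul, filter_const, eq_comm, apply_ite card, card_univ, card_empty]
  push_cast
  rfl

lemma card_filter_sq_add_mul_eq (hF : ringChar F ≠ 2) (d : F) :
    (#{x : F × F × F | x.1 ^ 2 + x.2.1 * x.2.2 = d} : ℤ) =
      Fintype.card F ^ 2 + Fintype.card F * quadraticChar F d := by
  have hfiber (a : F) : (#{y : F × F | a ^ 2 + y.1 * y.2 = d} : ℤ) =
      Fintype.card F - 1 + if a ^ 2 = d then (Fintype.card F : ℤ) else 0 := by
    simp only [← eq_sub_iff_add_eq', card_filter_mul_eq, sub_eq_zero, eq_comm (a := d)]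
  rw [card_filter_prod_eq_sum, Nat.cast_sum, sum_congr rfl fun a _ => hfiber a, sum_add_distrib,
    ← sum_filter, sum_const, sum_const, nsmul_eq_mul, nsmul_eq_mul, card_filter_sq_eq hF, card_univ]
  ring

lemma sum_comp_sq (hF : ringChar F ≠ 2) (f : F → ℤ) :
    ∑ y, f (y ^ 2) = ∑ v, (1 + quadraticChar F v) * f v := by
  rw [← sum_fiberwise univ fun y : F => y ^ 2]
  refine sum_congr rfl fun v _ => ?_
  rw [← card_filter_sq_eq hF, ← nsmul_eq_mul]
  exact sum_eq_card_nsmul fun y hy => congrArg f (mem_filter.1 hy).2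

lemma sum_quadraticChar_mul_sub (hF : ringChar F ≠ 2) {m : F} (hm : m ≠ 0) :
    ∑ u : F, quadraticChar F u * quadraticChar F (m - u) = -quadraticChar F (-1) := by
  rw [← jacobiSum_nontrivial_inv (quadraticChar_ne_one hF), (quadraticChar_isQuadratic F).inv,
    jacobiSum, ← Equiv.sum_comp (Equiv.mulLeft₀ m hm)]
  refine sum_congr rfl fun v _ => ?_
  rw [Equiv.mulLeft₀_apply, ← mul_one_sub, map_mul, map_mul, mul_mul_mul_comm, ← sq,
    quadraticChar_sq_one hm, one_mul]

lemma card_filter_sq_sub_mul_sq_eq (hF : ringChar F ≠ 2) {d m : F} (hd : d ≠ 0) (hm : m ≠ 0) :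
    (#{x : F × F | x.1 ^ 2 - d * x.2 ^ 2 = m} : ℤ) = Fintype.card F - quadraticChar F d := by
  have hchar (u : F) : quadraticChar F (-(d⁻¹ * u)) = quadraticChar F (-d) * quadraticChar F u := by
    rw [← map_mul, ← mul_one (quadraticChar F _), ← quadraticChar_sq_one' hd, ← map_mul]
    congr 1
    field_simp
  have hshift : ∑ u : F, quadraticChar F (m - u) = 0 :=
    ((Equiv.subLeft m).sum_comp _).trans (quadraticChar_sum_zero hF)
  calc (#{x : F × F | x.1 ^ 2 - d * x.2 ^ 2 = m} : ℤ)
      = ∑ y : F, (1 + quadraticChar F (m + d * y ^ 2)) := by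
        simp only [card_filter, Fintype.sum_prod_type_right, ← card_filter_sq_eq hF,
          sub_eq_iff_eq_add, Nat.cast_sum]
    _ = ∑ v : F, (1 + quadraticChar F v) * (1 + quadraticChar F (m + d * v)) :=
        sum_comp_sq hF fun v => 1 + quadraticChar F (m + d * v)
    _ = ∑ u : F, (1 + quadraticChar F (-d) * quadraticChar F u) *
          (1 + quadraticChar F (m - u)) := by
        rw [← Equiv.sum_comp (Equiv.mulLeft₀ (-d⁻¹) (neg_ne_zero.2 (inv_ne_zero hd)))]
        simp only [Equiv.mulLeft₀_apply, neg_mul, hchar, mul_neg, mul_inv_cancel_left₀ hd,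
          ← sub_eq_add_neg]
    _ = Fintype.card F + quadraticChar F (-d) *
          ∑ u : F, quadraticChar F u * quadraticChar F (m - u) := by
        simp only [add_mul, mul_add, one_mul, mul_one, sum_add_distrib, mul_assoc, ← mul_sum,
          hshift, quadraticChar_sum_zero hF, sum_const, card_univ, nsmul_one]
        ring
    _ = Fintype.card F - quadraticChar F d := by
        rw [sum_quadraticChar_mul_sub hF hm, mul_neg, ← map_mul, neg_mul_neg, mul_one,
          sub_eq_add_neg]

lemma two_mul_sum_comp_quadraticChar (hF : ringChar F ≠ 2) (f : ℤ → ℤ) :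
    2 * ∑ d : F, f (quadraticChar F d) = 2 * f 0 + (Fintype.card F - 1) * (f 1 + f (-1)) := by
  have hunits : ∀ d ∈ univ.erase (0 : F), 2 * f (quadraticChar F d) =
      (f 1 + f (-1)) + quadraticChar F d * (f 1 - f (-1)) := fun d hd => by
    rcases quadraticChar_dichotomy (ne_of_mem_erase hd) with h | h <;> rw [h] <;> ring
  have hsum : ∑ d ∈ univ.erase (0 : F), quadraticChar F d = 0 := by
    rw [sum_erase _ quadraticChar_zero, quadraticChar_sum_zero hF]
  rw [← add_sum_erase _ _ (mem_univ (0 : F)), quadraticChar_zero, mul_add, mul_sum,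
    sum_congr rfl hunits, sum_add_distrib, ← sum_mul, hsum, sum_const, nsmul_eq_mul,
    cast_card_erase_of_mem (mem_univ _), card_univ]
  ring

end QuadraticCharacter

section TwoByTwo

open Matrix

variable {F : Type*} [Field F]

lemma exists_eq_scalar_add_smul_of_commute {A B : M₂ F}
    (hA : A ∉ Set.range (scalar (Fin 2))) (h : Commute A B) :
    ∃ u v : F, B = scalar (Fin 2) u + v • A := by
  have hA' : ¬(A 0 1 = 0 ∧ A 1 0 = 0 ∧ A 0 0 = A 1 1) := by
    rintro ⟨h01, h10, h00⟩
    exact hA ⟨A 0 0, by ext i j; fin_cases i <;> fin_cases j <;> simp [h01, h10, h00]⟩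
  simp only [Commute, SemiconjBy, ← Matrix.ext_iff, mul_apply, Fin.sum_univ_two, Fin.forall_fin_two]
    at h
  obtain ⟨⟨h00, h01⟩, h10, -⟩ := h
  obtain ⟨v, hv01, hv10, hvd⟩ : ∃ v, B 0 1 = v * A 0 1 ∧ B 1 0 = v * A 1 0 ∧
      B 0 0 - B 1 1 = v * (A 0 0 - A 1 1) := by
    by_cases h1 : A 0 1 = 0
    · by_cases h2 : A 1 0 = 0
      · refine ⟨(B 0 0 - B 1 1) / (A 0 0 - A 1 1), ?_⟩
        have : A 0 0 - A 1 1 ≠ 0 := sub_ne_zero.2 fun h3 => hA' ⟨h1, h2, h3⟩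
        grind
      · exact ⟨B 1 0 / A 1 0, by grind⟩
    · exact ⟨B 0 1 / A 0 1, by grind⟩
  refine ⟨B 0 0 - v * A 0 0, v, ?_⟩
  ext i j
  fin_cases i <;> fin_cases j <;> simp [hv01, hv10]
  linear_combination -hvd

lemma commute_of_commute_of_notMem_range_scalar {A B C : M₂ F}
    (hA : A ∉ Set.range (scalar (Fin 2))) (hB : Commute A B) (hC : Commute A C) : Commute B C := by
  obtain ⟨u, v, rfl⟩ := exists_eq_scalar_add_smul_of_commute hA hB
  exact (scalar_commute u (Commute.all u) C).add_left (hC.smul_left v)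

lemma notMem_range_scalar_of_trace_eq_zero (h2 : (2 : F) ≠ 0) {x : M₂ F}
    (hx : x.trace = 0) (hx0 : x ≠ 0) : x ∉ Set.range (scalar (Fin 2)) := by
  rintro ⟨c, rfl⟩
  rw [trace_fin_two, scalar_apply, diagonal_apply_eq, diagonal_apply_eq, ← two_mul] at hx
  exact hx0 (by rw [(mul_eq_zero_iff_left h2).1 hx, map_zero])

lemma det_scalar_add_smul_of_trace_eq_zero {R : Type*} [CommRing R]
    {x : M₂ R} (hx : x.trace = 0) (u v : R) :
    (scalar (Fin 2) u + v • x).det = u ^ 2 - -x.det * v ^ 2 := by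
  rw [trace_fin_two] at hx
  have hentry (i j : Fin 2) :
      (scalar (Fin 2) u + v • x) i j = diagonal (fun _ => u) i j + v * x i j := rfl
  rw [det_fin_two, det_fin_two, hentry, hentry, hentry, hentry, diagonal_apply_eq,
    diagonal_apply_eq, diagonal_apply_ne _ zero_ne_one, diagonal_apply_ne _ one_ne_zero]
  linear_combination u * v * hx

lemma scalar_add_smul_inj {A : M₂ F} (hA : A ∉ Set.range (scalar (Fin 2))) {u v u' v' : F} :
    scalar (Fin 2) u + v • A = scalar (Fin 2) u' + v' • A ↔ u = u' ∧ v = v' := by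
  refine ⟨fun h => ?_, fun h => by rw [h.1, h.2]⟩
  have hv : v = v' := by
    by_contra hv
    have hsmul : (v - v') • A = scalar (Fin 2) (u' - u) := by
      rw [sub_smul, map_sub, sub_eq_sub_iff_add_eq_add, add_comm, h, add_comm]
    refine hA ⟨(v - v')⁻¹ * (u' - u), ?_⟩
    rw [← inv_smul_smul₀ (sub_ne_zero.2 hv) A, hsmul, scalar_apply, scalar_apply, ← diagonal_smul]
    rfl
  subst hv
  exact ⟨scalar_inj.1 (add_right_cancel h), rfl⟩

lemma coe_SL_two_inj {g h : SL₂ F} : (g : M₂ F) = h ↔ g = h :=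
  Subtype.coe_injective.eq_iff

lemma mem_center_SL_two_iff {g : SL₂ F} : g ∈ Subgroup.center (SL₂ F) ↔ g = 1 ∨ g = -1 := by
  have hone : (g : M₂ F) = scalar (Fin 2) 1 ↔ g = 1 := by
    rw [map_one, ← coe_SL_two_inj, Matrix.SpecialLinearGroup.coe_one]
  have hneg : (g : M₂ F) = scalar (Fin 2) (-1) ↔ g = -1 := by
    rw [map_neg, map_one, ← coe_SL_two_inj, Matrix.SpecialLinearGroup.coe_neg,
      Matrix.SpecialLinearGroup.coe_one]
  simp only [Matrix.SpecialLinearGroup.mem_center_iff, Fintype.card_fin, sq_eq_one_iff,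
    or_and_right, exists_or, exists_eq_left, eq_comm (b := (g : M₂ F)), hone, hneg]

lemma mem_center_SL_two_iff_mem_range_scalar {g : SL₂ F} :
    g ∈ Subgroup.center (SL₂ F) ↔ (g : M₂ F) ∈ Set.range (scalar (Fin 2)) := by
  rw [Matrix.SpecialLinearGroup.mem_center_iff]
  refine ⟨fun ⟨r, _, hr⟩ => ⟨r, hr⟩, fun ⟨r, hr⟩ => ⟨r, ?_, hr⟩⟩
  rw [← g.det_coe, ← hr, scalar_apply, det_diagonal, prod_const, card_univ]

lemma neg_one_ne_one_SL_two (h2 : (2 : F) ≠ 0) : (-1 : SL₂ F) ≠ 1 := fun h => by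
  have h00 : (-1 : F) = 1 := by simpa using congrArg (fun g : SL₂ F => g 0 0) h
  exact h2 (by linear_combination -h00)

lemma card_center_SL_two (h2 : (2 : F) ≠ 0) : Nat.card (Subgroup.center (SL₂ F)) = 2 := by
  have hcenter : (Subgroup.center (SL₂ F) : Set (SL₂ F)) = {1, -1} :=
    Set.ext fun _ => mem_center_SL_two_iff
  rw [← SetLike.coe_sort_coe, hcenter, Nat.card_coe_set_eq,
    Set.ncard_pair (neg_one_ne_one_SL_two h2).symm]

lemma commute_coe_SL_two_iff {g h : SL₂ F} : Commute (g : M₂ F) h ↔ Commute g h := by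
  rw [commute_iff_eq, commute_iff_eq, ← Matrix.SpecialLinearGroup.coe_mul,
    ← Matrix.SpecialLinearGroup.coe_mul, coe_SL_two_inj]

end TwoByTwo

instance {M : Type*} [Mul M] [DecidableEq M] (x y : M) : Decidable (Commute x y) :=
  decEq (x * y) (y * x)

lemma card_filter_forall {α : Type*} [Fintype α] (p : α → Prop) [DecidablePred p] (s : ℕ) :
    #{t : Fin s → α | ∀ i, p (t i)} = #{a | p a} ^ s := by
  rw [← Fintype.card_piFinset_const]
  congr 1
  ext t
  simp only [mem_filter, mem_univ, true_and, Fintype.mem_piFinset]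

section CommutingTuples

open Matrix

variable {F : Type*} [Field F] [Fintype F] [DecidableEq F]

lemma card_filter_trace_eq_zero_and_neg_det_eq (hF : ringChar F ≠ 2) (d : F) :
    (#{x : M₂ F | x.trace = 0 ∧ -x.det = d} : ℤ) =
      Fintype.card F ^ 2 + Fintype.card F * quadraticChar F d := by
  rw [← card_filter_sq_add_mul_eq hF]
  congr 1
  refine card_nbij' (fun x => (x 0 0, x 0 1, x 1 0)) (fun y => !![y.1, y.2.1; y.2.2, -y.1])
    (fun x hx => ?_) (fun y hy => ?_) (fun x hx => ?_) fun y _ => rfl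
  · obtain ⟨htr, rfl⟩ := (mem_filter.1 hx).2
    rw [trace_fin_two] at htr
    refine mem_filter.2 ⟨mem_univ _, ?_⟩
    rw [det_fin_two]
    linear_combination x 0 0 * htr
  · obtain rfl := (mem_filter.1 hy).2
    refine mem_filter.2 ⟨mem_univ _, ?_, ?_⟩
    · rw [trace_fin_two_of, add_neg_cancel]
    · rw [det_fin_two_of]
      ring
  · have htr := (mem_filter.1 hx).2.1
    rw [trace_fin_two, add_comm, add_eq_zero_iff_eq_neg] at htr
    rw [eta_fin_two x, htr]
    rfl

lemma card_filter_commute_coe_eq (h2 : (2 : F) ≠ 0) {x : M₂ F} (hx : x.trace = 0) (hx0 : x ≠ 0) :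
    #{g : SL₂ F | Commute x g} = #{y : F × F | y.1 ^ 2 - -x.det * y.2 ^ 2 = 1} := by
  have hx' := notMem_range_scalar_of_trace_eq_zero h2 hx hx0
  symm
  refine card_bij (fun y hy => ⟨scalar (Fin 2) y.1 + y.2 • x, ?_⟩) (fun y _ => ?_)
    (fun y _ z _ hyz => ?_) fun g hg => ?_
  · rw [det_scalar_add_smul_of_trace_eq_zero hx, (mem_filter.1 hy).2]
  · exact mem_filter.2 ⟨mem_univ _, (scalar_commute y.1 (Commute.all _) x).symm.add_right
      ((Commute.refl x).smul_right y.2)⟩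
  · exact Prod.ext_iff.2 ((scalar_add_smul_inj hx').1 (congrArg Subtype.val hyz))
  · obtain ⟨u, v, huv⟩ := exists_eq_scalar_add_smul_of_commute hx' (mem_filter.1 hg).2
    refine ⟨(u, v), mem_filter.2 ⟨mem_univ _, ?_⟩, Subtype.ext huv.symm⟩
    rw [← det_scalar_add_smul_of_trace_eq_zero hx, ← huv, g.det_coe]

lemma card_filter_commute_coe (hF : ringChar F ≠ 2) {x : M₂ F} (hx : x.trace = 0) (hx0 : x ≠ 0) :
    (#{g : SL₂ F | Commute x g} : ℤ) = if quadraticChar F (-x.det) = 0 then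
      2 * (Fintype.card F : ℤ) else Fintype.card F - quadraticChar F (-x.det) := by
  rw [card_filter_commute_coe_eq (Ring.two_ne_zero hF) hx hx0]
  split_ifs with hdet <;> rw [quadraticChar_eq_zero_iff] at hdet
  · simp only [hdet, zero_mul, sub_zero]
    rw [card_filter_prod_eq_sum]
    simp only [filter_const, apply_ite card, card_univ, card_empty]
    rw [← sum_filter, sum_const, smul_eq_mul, Nat.cast_mul, card_filter_sq_eq hF,
      map_one, one_add_one_eq_two]
  · exact card_filter_sq_sub_mul_sq_eq hF hdet one_ne_zero

lemma card_filter_trace_eq_zero_commute (h2 : (2 : F) ≠ 0) {A : M₂ F}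
    (hA : A ∉ Set.range (scalar (Fin 2))) :
    (#{x : M₂ F | (x.trace = 0 ∧ x ≠ 0) ∧ Commute x A} : ℤ) = Fintype.card F - 1 := by
  have htrace (u v : F) : (scalar (Fin 2) u + v • A).trace = 2 * u + v * A.trace := by
    rw [trace_add, trace_smul, trace_fin_two, scalar_apply, diagonal_apply_eq, diagonal_apply_eq,
      two_mul, smul_eq_mul]
  rw [← card_univ, ← cast_card_erase_of_mem (mem_univ (0 : F))]
  congr 1
  symm
  refine card_bij (fun v _ => scalar (Fin 2) (-(v * A.trace) / 2) + v • A) (fun v hv => ?_)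
    (fun v _ w _ hvw => ((scalar_add_smul_inj hA).1 hvw).2) fun x hx => ?_
  · refine mem_filter.2 ⟨mem_univ _, ⟨?_, fun h0 => ne_of_mem_erase hv ?_⟩, ?_⟩
    · rw [htrace]
      field_simp
      ring
    · exact ((scalar_add_smul_inj (u' := 0) (v' := 0) hA).1
        (by rw [h0, map_zero, zero_smul, zero_add])).2
    · exact (scalar_commute _ (Commute.all _) A).add_left ((Commute.refl A).smul_left v)
  · obtain ⟨⟨htr, hx0⟩, hcomm⟩ := (mem_filter.1 hx).2
    obtain ⟨u, v, rfl⟩ := exists_eq_scalar_add_smul_of_commute hA hcomm.symm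
    rw [htrace] at htr
    have hu : u = -(v * A.trace) / 2 := by
      rw [eq_div_iff h2]
      linear_combination htr
    refine ⟨v, mem_erase.2 ⟨?_, mem_univ _⟩, by rw [hu]⟩
    rintro rfl
    rw [zero_mul, neg_zero, zero_div] at hu
    exact hx0 (by rw [hu, map_zero, zero_smul, zero_add])

lemma card_filter_forall_mem_center (h2 : (2 : F) ≠ 0) (s : ℕ) :
    #{t : Fin s → SL₂ F | ∀ i, t i ∈ Subgroup.center (SL₂ F)} = 2 ^ s := by
  have hcard := card_center_SL_two h2
  rw [Nat.card_eq_fintype_card, Fintype.card_subtype] at hcard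
  rw [card_filter_forall (· ∈ Subgroup.center (SL₂ F)), hcard]

lemma card_filter_forall_commute_exists_notMem_center (h2 : (2 : F) ≠ 0) (x : M₂ F) (s : ℕ) :
    (#{t : Fin s → SL₂ F | (∀ i, Commute x (t i)) ∧ ∃ i, t i ∉ Subgroup.center (SL₂ F)} : ℤ) =
      #{g : SL₂ F | Commute x g} ^ s - 2 ^ s := by
  have hcentral : ({t | ∀ i, t i ∈ Subgroup.center (SL₂ F)} : Finset (Fin s → SL₂ F)) ⊆
      ({t | ∀ i, Commute x (t i)} : Finset (Fin s → SL₂ F)) := by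
    refine monotone_filter_right _ fun t _ ht i => ?_
    obtain ⟨u, hu⟩ := mem_center_SL_two_iff_mem_range_scalar.1 (ht i)
    rw [← hu]
    exact (scalar_commute u (Commute.all u) x).symm
  simp only [← not_forall, filter_and_not]
  rw [cast_card_sdiff hcentral, card_filter_forall_mem_center h2,
    card_filter_forall fun g : SL₂ F => Commute x g, Nat.cast_pow, Nat.cast_pow, Nat.cast_ofNat]

lemma card_filter_commute_exists_notMem_center_mul (h2 : (2 : F) ≠ 0) (s : ℕ) :
    (#{t : Fin s → SL₂ F | (∀ i j, Commute (t i) (t j)) ∧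
        ∃ i, t i ∉ Subgroup.center (SL₂ F)} : ℤ) * (Fintype.card F - 1) =
      ∑ x : M₂ F with x.trace = 0 ∧ x ≠ 0, ((#{g : SL₂ F | Commute x g} : ℤ) ^ s - 2 ^ s) := by
  set X : Finset (M₂ F) := {x | x.trace = 0 ∧ x ≠ 0}
  set T : Finset (Fin s → SL₂ F) := {t | (∀ i j, Commute (t i) (t j)) ∧
    ∃ i, t i ∉ Subgroup.center (SL₂ F)}
  let r (x : M₂ F) (t : Fin s → SL₂ F) : Prop := ∀ i, Commute x (t i)
  have habove : ∀ x ∈ X, (#(T.bipartiteAbove r x) : ℤ) =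
      (#{g : SL₂ F | Commute x g} : ℤ) ^ s - 2 ^ s := fun x hx => by
    obtain ⟨htr, hx0⟩ := (mem_filter.1 hx).2
    have hx' := notMem_range_scalar_of_trace_eq_zero h2 htr hx0
    rw [← card_filter_forall_commute_exists_notMem_center h2, bipartiteAbove, filter_filter]
    congr 2
    ext t
    simp only [mem_filter, mem_univ, true_and]
    exact ⟨fun ht => ⟨ht.2, ht.1.2⟩, fun ht => ⟨⟨fun i j => commute_coe_SL_two_iff.1
      (commute_of_commute_of_notMem_range_scalar hx' (ht.1 i) (ht.1 j)), ht.2⟩, ht.1⟩⟩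
  have hbelow : ∀ t ∈ T, (#(X.bipartiteBelow r t) : ℤ) = Fintype.card F - 1 := fun t ht => by
    obtain ⟨hcomm, i, hi⟩ := (mem_filter.1 ht).2
    rw [mem_center_SL_two_iff_mem_range_scalar] at hi
    rw [← card_filter_trace_eq_zero_commute h2 hi, bipartiteBelow, filter_filter]
    congr 2
    ext x
    simp only [mem_filter, mem_univ, true_and, and_congr_right_iff]
    exact fun _ => ⟨fun hx => hx i, fun hx j => (commute_of_commute_of_notMem_range_scalar hi
      (commute_coe_SL_two_iff.2 (hcomm i j)) hx.symm).symm⟩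
  rw [← sum_congr rfl habove, ← Nat.cast_sum, sum_card_bipartiteAbove_eq_sum_card_bipartiteBelow,
    Nat.cast_sum, sum_congr rfl hbelow, sum_const, nsmul_eq_mul]

lemma sum_comp_neg_det_of_trace_eq_zero (hF : ringChar F ≠ 2) (f : F → ℤ) :
    ∑ x : M₂ F with x.trace = 0, f (-x.det) =
      ∑ d, (Fintype.card F ^ 2 + Fintype.card F * quadraticChar F d) * f d := by
  rw [← sum_fiberwise _ fun x : M₂ F => -x.det]
  refine sum_congr rfl fun d _ => ?_
  rw [← card_filter_trace_eq_zero_and_neg_det_eq hF, filter_filter, ← nsmul_eq_mul]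
  exact sum_eq_card_nsmul fun x hx => congrArg f (mem_filter.1 hx).2.2

lemma two_mul_card_filter_commute_exists_notMem_center (hF : ringChar F ≠ 2) (s : ℕ) :
    2 * (#{t : Fin s → SL₂ F | (∀ i j, Commute (t i) (t j)) ∧
        ∃ i, t i ∉ Subgroup.center (SL₂ F)} : ℤ) =
      2 * (Fintype.card F + 1) * ((2 * Fintype.card F) ^ s - 2 ^ s) +
        (Fintype.card F ^ 2 + Fintype.card F) * ((Fintype.card F - 1) ^ s - 2 ^ s) +
        (Fintype.card F ^ 2 - Fintype.card F) * ((Fintype.card F + 1) ^ s - 2 ^ s) := by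
  have hcard : (Fintype.card F : ℤ) - 1 ≠ 0 :=
    sub_ne_zero.2 (Nat.cast_ne_one.2 Fintype.one_lt_card.ne')
  let f (ε : ℤ) : ℤ :=
    (if ε = 0 then 2 * (Fintype.card F : ℤ) else Fintype.card F - ε) ^ s - 2 ^ s
  have hsum : ∑ x : M₂ F with x.trace = 0 ∧ x ≠ 0, ((#{g : SL₂ F | Commute x g} : ℤ) ^ s - 2 ^ s) =
      ∑ x : M₂ F with x.trace = 0, f (quadraticChar F (-x.det)) - f 0 := by
    have hzero : (0 : M₂ F) ∈ ({x | x.trace = 0} : Finset (M₂ F)) :=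
      mem_filter.2 ⟨mem_univ _, trace_zero _ _⟩
    rw [← filter_filter, filter_ne', eq_sub_iff_add_eq, ← sum_erase_add _ _ hzero, det_zero,
      neg_zero, quadraticChar_zero]
    refine congrArg (· + f 0) (sum_congr rfl fun x hx => ?_)
    rw [card_filter_commute_coe hF (mem_filter.1 (mem_of_mem_erase hx)).2 (ne_of_mem_erase hx)]
  have hdouble := two_mul_sum_comp_quadraticChar (F := F) hF fun ε =>
    (Fintype.card F ^ 2 + Fintype.card F * ε) * f ε
  refine mul_right_cancel₀ hcard ?_
  rw [mul_assoc, card_filter_commute_exists_notMem_center_mul (Ring.two_ne_zero hF), hsum,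
    sum_comp_neg_det_of_trace_eq_zero hF fun d => f (quadraticChar F d), mul_sub, hdouble]
  simp only [f, if_pos, one_ne_zero, neg_ne_zero, ne_eq, not_false_eq_true, if_neg]
  ring

theorem two_mul_card_filter_commute (hF : ringChar F ≠ 2) (s : ℕ) :
    2 * (#{t : Fin s → SL₂ F | ∀ i j, Commute (t i) (t j)} : ℤ) =
      2 * (Fintype.card F + 1) * (2 * Fintype.card F) ^ s +
        (Fintype.card F ^ 2 + Fintype.card F) * (Fintype.card F - 1) ^ s +
        (Fintype.card F ^ 2 - Fintype.card F) * (Fintype.card F + 1) ^ s -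
        2 * (Fintype.card F ^ 2 + Fintype.card F) * 2 ^ s := by
  have hcentral : ({t | ∀ i, t i ∈ Subgroup.center (SL₂ F)} : Finset (Fin s → SL₂ F)) ⊆
      ({t | ∀ i j, Commute (t i) (t j)} : Finset (Fin s → SL₂ F)) :=
    monotone_filter_right _ fun t _ ht i j => (Subgroup.mem_center_iff.1 (ht j) (t i))
  have hnoncentral := two_mul_card_filter_commute_exists_notMem_center hF s
  simp only [← not_forall, filter_and_not] at hnoncentral
  rw [cast_card_sdiff hcentral, card_filter_forall_mem_center (Ring.two_ne_zero hF)] at hnoncentral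
  push_cast at hnoncentral
  linear_combination hnoncentral

end CommutingTuples

section Anticommute

variable {G : Type*} [Group G] [HasDistribNeg G]

/-- `x * y = -(y * x)`, phrased through `SemiconjBy` so that products and inverses of
anticommuting elements are handled by the `SemiconjBy` API. -/
def Anticommute (x y : G) : Prop := SemiconjBy x y (-y)

/-- `x` and `y` commute up to sign, i.e. they commute modulo `{1, -1}`. -/
def SignCommute (x y : G) : Prop := Commute x y ∨ Anticommute x y

lemma anticommute_iff_eq {x y : G} : Anticommute x y ↔ x * y = -(y * x) := by
  rw [Anticommute, SemiconjBy, neg_mul]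

lemma Anticommute.symm {x y : G} (h : Anticommute x y) : Anticommute y x := by
  rw [anticommute_iff_eq] at h ⊢
  rw [h, neg_neg]

lemma SignCommute.symm {x y : G} (h : SignCommute x y) : SignCommute y x :=
  h.imp Commute.symm Anticommute.symm

lemma Anticommute.not_commute (h1 : (-1 : G) ≠ 1) {x y : G} (h : Anticommute x y) :
    ¬Commute x y := fun hc => h1 <| by
  rw [anticommute_iff_eq, hc.eq, ← neg_one_mul, right_eq_mul] at h
  exact h

lemma Anticommute.commute_inv_mul {x y z : G} (hx : Anticommute x z) (hy : Anticommute y z) :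
    Commute (x⁻¹ * y) z :=
  hx.inv_symm_left.mul_left hy

lemma anticommute_mul_of_anticommute_of_commute {x y z : G}
    (hx : Anticommute x z) (hy : Commute y z) : Anticommute (x * y) z :=
  hx.mul_left hy

lemma anticommute_mul_of_commute_of_anticommute {x y z : G}
    (hx : Commute x z) (hy : Anticommute y z) : Anticommute (x * y) z :=
  SemiconjBy.mul_left hx.neg_right hy

instance [DecidableEq G] (x y : G) : Decidable (Anticommute x y) :=
  decEq (x * y) (-y * x)

instance [DecidableEq G] (x y : G) : Decidable (SignCommute x y) :=
  inferInstanceAs (Decidable (Commute x y ∨ Anticommute x y))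

/-- The element `± aᵘ bᵛ` with exponent vector `w = (ε, u, v)`; for anticommuting `a`, `b` with
`a² = b² = -1` these are the elements of a quaternion group. -/
def quat (a b : G) (w : Bool × Bool × Bool) : G :=
  (if w.1 then -1 else 1) * ((if w.2.1 then a else 1) * if w.2.2 then b else 1)

/-- The alternating form `u v' - u' v` on exponent vectors, which decides whether the corresponding
values of `quat` commute. -/
def pairing (w z : Bool × Bool × Bool) : Bool := (w.2.1 && z.2.2) ^^ (z.2.1 && w.2.2)

lemma quat_u (a b : G) : quat a b (false, true, false) = a := by
  simp only [quat, if_true, Bool.false_eq_true, if_false, one_mul, mul_one]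

lemma quat_v (a b : G) : quat a b (false, false, true) = b := by
  simp only [quat, if_true, Bool.false_eq_true, if_false, one_mul]

lemma quat_true (a b : G) (u v : Bool) : quat a b (true, u, v) = -quat a b (false, u, v) := by
  simp only [quat, if_true, Bool.false_eq_true, if_false, neg_one_mul, one_mul]

lemma quat_mul (a b : G) : quat a b (false, true, true) = a * b := by
  simp only [quat, if_true, Bool.false_eq_true, if_false, one_mul]

variable {a b : G}

lemma Anticommute.quat_mul_quat (hab : Anticommute a b) (w z : Bool × Bool × Bool) :
    quat a b w * quat a b z = (if pairing w z then -1 else 1) * (quat a b z * quat a b w) := by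
  have hba : b * a = -(a * b) := anticommute_iff_eq.1 hab.symm
  have hba' (c : G) : b * (a * c) = -(a * (b * c)) := by
    rw [← mul_assoc, hba, neg_mul, mul_assoc]
  obtain ⟨w1, w2, w3⟩ := w
  obtain ⟨z1, z2, z3⟩ := z
  cases w1 <;> cases w2 <;> cases w3 <;> cases z1 <;> cases z2 <;> cases z3 <;>
    simp [quat, pairing, mul_assoc, hba, hba']

lemma Anticommute.commute_quat (hab : Anticommute a b) {w z : Bool × Bool × Bool}
    (h : pairing w z = false) : Commute (quat a b w) (quat a b z) := by
  rw [commute_iff_eq, hab.quat_mul_quat, h, if_neg Bool.false_ne_true, one_mul]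

lemma Anticommute.anticommute_quat (hab : Anticommute a b) {w z : Bool × Bool × Bool}
    (h : pairing w z) : Anticommute (quat a b w) (quat a b z) := by
  rw [anticommute_iff_eq, hab.quat_mul_quat, if_pos h, neg_one_mul]

lemma Anticommute.commute_quat_iff (h1 : (-1 : G) ≠ 1) (hab : Anticommute a b)
    {w z : Bool × Bool × Bool} : Commute (quat a b w) (quat a b z) ↔ pairing w z = false := by
  refine ⟨fun hcomm => ?_, hab.commute_quat⟩
  rw [← Bool.not_eq_true]
  exact fun h => (hab.anticommute_quat h).not_commute h1 hcomm

lemma Anticommute.anticommute_quat_iff (h1 : (-1 : G) ≠ 1) (hab : Anticommute a b)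
    {w z : Bool × Bool × Bool} : Anticommute (quat a b w) (quat a b z) ↔ pairing w z := by
  refine ⟨fun hanti => ?_, hab.anticommute_quat⟩
  rw [← Bool.not_eq_false, ← hab.commute_quat_iff h1]
  exact hanti.not_commute h1

lemma Anticommute.signCommute_quat (hab : Anticommute a b) (w z : Bool × Bool × Bool) :
    SignCommute (quat a b w) (quat a b z) := by
  cases h : pairing w z
  · exact Or.inl (hab.commute_quat h)
  · exact Or.inr (hab.anticommute_quat h)

lemma Anticommute.signCommute_of_mem_range_quat (hab : Anticommute a b) {x y : G}
    (hx : x ∈ Set.range (quat a b)) (hy : y ∈ Set.range (quat a b)) : SignCommute x y := by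
  obtain ⟨w, rfl⟩ := hx
  obtain ⟨z, rfl⟩ := hy
  exact hab.signCommute_quat w z

lemma Anticommute.quat_injective (h1 : (-1 : G) ≠ 1) (hab : Anticommute a b) :
    Function.Injective (quat a b) := by
  intro w z h
  have hpairing (y : Bool × Bool × Bool) : pairing w y = pairing z y := by
    rw [Bool.eq_iff_iff, ← hab.anticommute_quat_iff h1, h, hab.anticommute_quat_iff h1]
  have hu := hpairing (false, false, true)
  have hv := hpairing (false, true, false)
  obtain ⟨w1, w2, w3⟩ := w
  obtain ⟨z1, z2, z3⟩ := z
  simp only [pairing, Bool.and_true, Bool.and_false, Bool.false_and, Bool.true_and, Bool.xor_false,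
    Bool.false_xor] at hu hv
  subst hu hv
  have hsign := mul_right_cancel h
  cases w1 <;> cases z1 <;> simp_all [h1.symm]

lemma Anticommute.exists_quat_eq (hab : Anticommute a b)
    (hcent : ∀ g : G, Commute g a → Commute g b → g = 1 ∨ g = -1) {g : G} (ha : SignCommute g a)
    (hb : SignCommute g b) : ∃ w, quat a b w = g := by
  obtain ⟨u, v, hu, hv⟩ : ∃ u v : Bool, Commute ((quat a b (false, u, v))⁻¹ * g) a ∧
      Commute ((quat a b (false, u, v))⁻¹ * g) b := by
    rcases ha with ha | ha <;> rcases hb with hb | hb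
    · refine ⟨false, false, ?_⟩
      simpa [quat] using ⟨ha, hb⟩
    · refine ⟨true, false, ?_⟩
      rw [quat_u]
      exact ⟨(Commute.refl a).inv_left.mul_left ha, hab.commute_inv_mul hb⟩
    · refine ⟨false, true, ?_⟩
      rw [quat_v]
      exact ⟨hab.symm.commute_inv_mul ha, (Commute.refl b).inv_left.mul_left hb⟩
    · refine ⟨true, true, ?_⟩
      rw [quat_mul]
      have hmula := anticommute_mul_of_commute_of_anticommute (Commute.refl a) hab.symm
      have hmulb := anticommute_mul_of_anticommute_of_commute hab (Commute.refl b)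
      exact ⟨hmula.commute_inv_mul ha, hmulb.commute_inv_mul hb⟩
  rcases hcent _ hu hv with h | h
  · exact ⟨(false, u, v), inv_mul_eq_one.1 h⟩
  · refine ⟨(true, u, v), ?_⟩
    rw [inv_mul_eq_iff_eq_mul, mul_neg_one] at h
    rw [h, quat_true]

lemma Anticommute.mem_range_quat_iff (hab : Anticommute a b)
    (hcent : ∀ g : G, Commute g a → Commute g b → g = 1 ∨ g = -1) {g : G} :
    g ∈ Set.range (quat a b) ↔ SignCommute g a ∧ SignCommute g b := by
  refine ⟨?_, fun h => hab.exists_quat_eq hcent h.1 h.2⟩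
  rintro ⟨w, rfl⟩
  have hu := hab.signCommute_quat w (false, true, false)
  have hv := hab.signCommute_quat w (false, false, true)
  rw [quat_u] at hu
  rw [quat_v] at hv
  exact ⟨hu, hv⟩

lemma exists_pairing_iff {ι : Type*} (w : ι → Bool × Bool × Bool) :
    (∃ i j, pairing (w i) (w j)) ↔ (fun i => (w i).2.1) ≠ (fun _ => false) ∧
      (fun i => (w i).2.2) ≠ (fun _ => false) ∧ (fun i => (w i).2.1) ≠ fun i => (w i).2.2 := by
  simp only [Function.ne_iff, pairing]
  refine ⟨fun ⟨i, j, h⟩ => ?_, fun ⟨⟨i, hi⟩, ⟨j, hj⟩, k, hk⟩ => ?_⟩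
  · refine ⟨?_, ?_, ?_⟩ <;> by_contra! H <;> grind
  · by_contra! H
    have hij := H i j
    have hik := H i k
    grind [H j k]

lemma card_filter_exists_pairing (s : ℕ) :
    (#{w : Fin s → Bool × Bool × Bool | ∃ i j, pairing (w i) (w j)} : ℤ) =
      2 ^ s * ((2 ^ s - 1) * (2 ^ s - 2)) := by
  have hcard : #{w : Fin s → Bool × Bool × Bool | ∃ i j, pairing (w i) (w j)} =
      #((univ : Finset (Fin s → Bool)) ×ˢ
        ((univ : Finset (Fin s → Bool)).erase fun _ => false).offDiag) := by
    refine card_nbij' (fun w => (fun i => (w i).1, fun i => (w i).2.1, fun i => (w i).2.2))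
      (fun x i => (x.1 i, x.2.1 i, x.2.2 i)) (fun w hw => ?_) (fun x hx => ?_)
      (fun w _ => rfl) (fun x _ => rfl)
    · have h := (exists_pairing_iff w).1 (mem_filter.1 hw).2
      simpa only [mem_coe, mem_product, mem_univ, mem_offDiag, mem_erase, and_true,
        true_and] using h
    · refine mem_filter.2 ⟨mem_univ _, (exists_pairing_iff _).2 ?_⟩
      simpa only [mem_coe, mem_product, mem_univ, mem_offDiag, mem_erase, and_true,
        true_and] using hx
  rw [hcard, card_product, offDiag_card, card_erase_of_mem (mem_univ _), card_univ,
    Fintype.card_fun, Fintype.card_bool, Fintype.card_fin, Nat.cast_mul,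
    Nat.cast_sub (Nat.le_mul_self _), Nat.cast_mul, Nat.cast_sub Nat.one_le_two_pow]
  push_cast
  ring

section Counting

variable [Fintype G] [DecidableEq G]

lemma card_filter_anticommute_mem_range_quat (h1 : (-1 : G) ≠ 1) (hab : Anticommute a b) :
    #{x : G × G | Anticommute x.1 x.2 ∧ x.1 ∈ Set.range (quat a b) ∧
      x.2 ∈ Set.range (quat a b)} = 24 := by
  have h24 : #{x : (Bool × Bool × Bool) × (Bool × Bool × Bool) | pairing x.1 x.2} = 24 := by decide
  rw [← h24]
  symm
  refine card_bij (fun x _ => (quat a b x.1, quat a b x.2)) (fun x hx => ?_)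
    (fun x _ y _ hxy => ?_) fun x hx => ?_
  · exact mem_filter.2 ⟨mem_univ _, hab.anticommute_quat (mem_filter.1 hx).2, ⟨_, rfl⟩, _, rfl⟩
  · obtain ⟨hfst, hsnd⟩ := Prod.ext_iff.1 hxy
    exact Prod.ext (hab.quat_injective h1 hfst) (hab.quat_injective h1 hsnd)
  · obtain ⟨hx, ⟨w, hw⟩, z, hz⟩ := (mem_filter.1 hx).2
    refine ⟨(w, z), mem_filter.2 ⟨mem_univ _, ?_⟩, Prod.ext hw hz⟩
    rwa [← hab.anticommute_quat_iff h1, hw, hz]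

lemma card_filter_forall_mem_range_quat (h1 : (-1 : G) ≠ 1) (hab : Anticommute a b) (s : ℕ) :
    (#{t : Fin s → G | (∀ i, t i ∈ Set.range (quat a b)) ∧ ∃ i j, ¬Commute (t i) (t j)} : ℤ) =
      2 ^ s * ((2 ^ s - 1) * (2 ^ s - 2)) := by
  rw [← card_filter_exists_pairing]
  congr 1
  symm
  refine card_bij (fun w _ i => quat a b (w i)) (fun w hw => ?_) (fun w _ z _ hwz => ?_)
    fun t ht => ?_
  · obtain ⟨i, j, hij⟩ := (mem_filter.1 hw).2
    exact mem_filter.2 ⟨mem_univ _, fun _ => ⟨_, rfl⟩, i, j,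
      (hab.anticommute_quat hij).not_commute h1⟩
  · exact funext fun i => hab.quat_injective h1 (congrFun hwz i)
  · obtain ⟨hquat, i, j, hij⟩ := (mem_filter.1 ht).2
    choose w hw using hquat
    refine ⟨w, mem_filter.2 ⟨mem_univ _, i, j, ?_⟩, funext hw⟩
    rwa [← hw i, ← hw j, hab.commute_quat_iff h1, Bool.not_eq_false] at hij

theorem card_filter_signCommute_not_commute_mul (h1 : (-1 : G) ≠ 1)
    (hcent : ∀ a b : G, Anticommute a b → ∀ g, Commute g a → Commute g b → g = 1 ∨ g = -1) (s : ℕ) :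
    (#{t : Fin s → G | (∀ i j, SignCommute (t i) (t j)) ∧ ∃ i j, ¬Commute (t i) (t j)} : ℤ) * 24 =
      #{x : G × G | Anticommute x.1 x.2} * (2 ^ s * ((2 ^ s - 1) * (2 ^ s - 2))) := by
  set T : Finset (Fin s → G) :=
    {t | (∀ i j, SignCommute (t i) (t j)) ∧ ∃ i j, ¬Commute (t i) (t j)}
  set P : Finset (G × G) := {x | Anticommute x.1 x.2}
  let r (x : G × G) (t : Fin s → G) : Prop := ∀ i, SignCommute (t i) x.1 ∧ SignCommute (t i) x.2
  have habove : ∀ x ∈ P, (#(T.bipartiteAbove r x) : ℤ) = 2 ^ s * ((2 ^ s - 1) * (2 ^ s - 2)) :=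
      fun x hx => by
    have hab : Anticommute x.1 x.2 := (mem_filter.1 hx).2
    rw [← card_filter_forall_mem_range_quat h1 hab, bipartiteAbove, filter_filter]
    congr 2
    refine filter_congr fun t _ => ?_
    simp only [r, ← hab.mem_range_quat_iff (hcent _ _ hab)]
    exact ⟨fun ht => ⟨ht.2, ht.1.2⟩, fun ht =>
      ⟨⟨fun i j => hab.signCommute_of_mem_range_quat (ht.1 i) (ht.1 j), ht.2⟩, ht.1⟩⟩
  have hbelow : ∀ t ∈ T, #(P.bipartiteBelow r t) = 24 := fun t ht => by
    obtain ⟨hsign, i, j, hij⟩ := (mem_filter.1 ht).2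
    have hab := (hsign i j).resolve_left hij
    rw [← card_filter_anticommute_mem_range_quat h1 hab, bipartiteBelow, filter_filter]
    congr 1
    have hmem (g : G) := hab.mem_range_quat_iff (g := g) (hcent _ _ hab)
    refine filter_congr fun x _ => and_congr_right fun _ => ⟨fun hx => ?_, fun hx k => ?_⟩
    · exact ⟨(hmem _).2 ⟨(hx i).1.symm, (hx j).1.symm⟩, (hmem _).2 ⟨(hx i).2.symm, (hx j).2.symm⟩⟩
    · have hk := (hmem _).2 ⟨hsign k i, hsign k j⟩
      exact ⟨hab.signCommute_of_mem_range_quat hk hx.1, hab.signCommute_of_mem_range_quat hk hx.2⟩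
  have hdouble := sum_card_bipartiteAbove_eq_sum_card_bipartiteBelow (s := P) (t := T) r
  rw [sum_congr rfl hbelow, sum_const, smul_eq_mul] at hdouble
  rw [← Nat.cast_ofNat, ← Nat.cast_mul, ← hdouble, Nat.cast_sum, sum_congr rfl habove, sum_const,
    nsmul_eq_mul]

end Counting

end Anticommute

section AnticommutingPairs

open Matrix

lemma card_filter_anticommute_eq {G : Type*} [Group G] [HasDistribNeg G] [Fintype G] [DecidableEq G]
    {x y : G} (h : Anticommute x y) : #{z | Anticommute x z} = #{z | Commute x z} := by
  refine card_nbij' (y⁻¹ * ·) (y * ·) (fun z hz => ?_) (fun z hz => ?_)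
    (fun z _ => mul_inv_cancel_left y z) fun z _ => inv_mul_cancel_left y z
  · have hzx := (mem_filter.1 hz).2.symm
    exact mem_filter.2 ⟨mem_univ _, (h.symm.commute_inv_mul hzx).symm⟩
  · have hzx := (mem_filter.1 hz).2.symm
    exact mem_filter.2 ⟨mem_univ _, (anticommute_mul_of_anticommute_of_commute h.symm hzx).symm⟩

variable {F : Type*} [Field F]

lemma Anticommute.trace_eq_zero (h2 : (2 : F) ≠ 0) {x y : SL₂ F} (h : Anticommute x y) :
    (x : M₂ F).trace = 0 := by
  have hconj : y * x * y⁻¹ = -x := by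
    rw [anticommute_iff_eq.1 h.symm, neg_mul, mul_inv_cancel_right]
  have htrace : (x : M₂ F).trace = -(x : M₂ F).trace := by
    rw [← trace_neg, ← Matrix.SpecialLinearGroup.coe_neg, ← hconj,
      Matrix.SpecialLinearGroup.coe_mul, trace_mul_comm, ← Matrix.SpecialLinearGroup.coe_mul,
      ← mul_assoc, inv_mul_cancel, one_mul]
  refine (mul_eq_zero_iff_left h2).1 ?_
  linear_combination htrace

lemma exists_orthogonal_of_neg_sq_sub_mul_eq_one [Finite F] (h2 : (2 : F) ≠ 0) {a b c : F}
    (h : -a ^ 2 - b * c = 1) :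
    ∃ u v w : F, 2 * a * u + b * w + c * v = 0 ∧ -u ^ 2 - v * w = 1 := by
  by_cases hc : c = 0
  · have ha : a ≠ 0 := by
      rintro rfl
      simp [hc] at h
    refine ⟨-b, -(1 + b ^ 2) / (2 * a), 2 * a, ?_, ?_⟩
    · rw [hc]
      ring
    · field_simp
      ring
  · have : NeZero (ringChar F) := ⟨CharP.char_ne_zero_of_finite F _⟩
    obtain ⟨m, n, hmn⟩ := CharP.sq_add_sq F (ringChar F) (-1)
    refine ⟨m + a * n, -(2 * a * (m + a * n) + b * (c * n)) / c, c * n, ?_, ?_⟩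
    · field_simp
      ring
    · -- By `h`, for this `u`, `v`, `w` the form `-u ^ 2 - v * w` equals `-(m ^ 2 + n ^ 2)`.
      push_cast at hmn
      field_simp
      linear_combination -n ^ 2 * h - hmn

lemma exists_anticommute_of_trace_eq_zero [Finite F] (h2 : (2 : F) ≠ 0) {x : SL₂ F}
    (hx : (x : M₂ F).trace = 0) : ∃ y, Anticommute x y := by
  have hd : x 1 1 = -x 0 0 := by
    rw [trace_fin_two] at hx
    linear_combination hx
  have hdet : -x 0 0 ^ 2 - x 0 1 * x 1 0 = 1 := by
    have := x.det_coe
    rw [det_fin_two, hd] at this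
    linear_combination this
  obtain ⟨u, v, w, hxy, hdet'⟩ := exists_orthogonal_of_neg_sq_sub_mul_eq_one h2 hdet
  obtain ⟨y, hy⟩ : ∃ y : SL₂ F, (y : M₂ F) = !![u, v; w, -u] :=
    ⟨⟨_, by rw [det_fin_two_of]; linear_combination hdet'⟩, rfl⟩
  refine ⟨y, anticommute_iff_eq.2 (coe_SL_two_inj.1 ?_)⟩
  rw [Matrix.SpecialLinearGroup.coe_neg, Matrix.SpecialLinearGroup.coe_mul,
    Matrix.SpecialLinearGroup.coe_mul, hy, eta_fin_two (x : M₂ F), hd]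
  ext i j
  fin_cases i <;> fin_cases j <;> simp <;> grind

lemma Anticommute.eq_one_or_eq_neg_one (h2 : (2 : F) ≠ 0) {a b g : SL₂ F} (hab : Anticommute a b)
    (ha : Commute g a) (hb : Commute g b) : g = 1 ∨ g = -1 := by
  rw [← mem_center_SL_two_iff, mem_center_SL_two_iff_mem_range_scalar]
  by_contra hg
  exact hab.not_commute (neg_one_ne_one_SL_two h2) <| commute_coe_SL_two_iff.1 <|
    commute_of_commute_of_notMem_range_scalar hg (commute_coe_SL_two_iff.2 ha)
      (commute_coe_SL_two_iff.2 hb)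

variable [Fintype F] [DecidableEq F]

lemma card_filter_anticommute (hF : ringChar F ≠ 2) {x : SL₂ F} (hx : (x : M₂ F).trace = 0) :
    (#{y | Anticommute x y} : ℤ) = Fintype.card F - quadraticChar F (-1) := by
  have hx0 : (x : M₂ F) ≠ 0 := fun h => by simpa [h] using x.det_coe
  obtain ⟨y, hy⟩ := exists_anticommute_of_trace_eq_zero (Ring.two_ne_zero hF) hx
  have hcard := card_filter_commute_coe hF hx hx0
  rw [x.det_coe, if_neg (mt quadraticChar_eq_zero_iff.1 (neg_ne_zero.2 one_ne_zero))] at hcard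
  rw [card_filter_anticommute_eq hy, ← hcard]
  simp only [commute_coe_SL_two_iff]

lemma card_filter_SL_two_trace_eq_zero (hF : ringChar F ≠ 2) :
    (#{x : SL₂ F | (x : M₂ F).trace = 0} : ℤ) =
      Fintype.card F ^ 2 + Fintype.card F * quadraticChar F (-1) := by
  rw [← card_filter_trace_eq_zero_and_neg_det_eq hF]
  congr 1
  refine card_nbij Subtype.val (fun x hx => ?_) Subtype.val_injective.injOn fun x hx => ?_
  · exact mem_filter.2 ⟨mem_univ _, (mem_filter.1 hx).2, congrArg Neg.neg x.det_coe⟩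
  · obtain ⟨htr, hdet⟩ := (mem_filter.1 hx).2
    exact ⟨⟨x, neg_injective hdet⟩, mem_filter.2 ⟨mem_univ _, htr⟩, rfl⟩

lemma card_filter_anticommute_pairs (hF : ringChar F ≠ 2) :
    (#{x : SL₂ F × SL₂ F | Anticommute x.1 x.2} : ℤ) =
      Fintype.card F * (Fintype.card F ^ 2 - 1) := by
  have hfiber (x : SL₂ F) : (#{y | Anticommute x y} : ℤ) =
      if (x : M₂ F).trace = 0 then Fintype.card F - quadraticChar F (-1) else 0 := by
    split_ifs with hx
    · exact card_filter_anticommute hF hx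
    · rw [Nat.cast_eq_zero, card_eq_zero, filter_eq_empty_iff]
      exact fun y _ hy => hx (hy.trace_eq_zero (Ring.two_ne_zero hF))
  have hchar : quadraticChar F (-1) ^ 2 = 1 :=
    quadraticChar_sq_one (neg_ne_zero.2 one_ne_zero)
  rw [card_filter_prod_eq_sum, Nat.cast_sum, sum_congr rfl fun x _ => hfiber x, ← sum_filter,
    sum_const, nsmul_eq_mul, card_filter_SL_two_trace_eq_zero hF]
  linear_combination -(Fintype.card F : ℤ) * hchar

end AnticommutingPairs

lemma card_subtype_comp_mk {G : Type*} [Group G] (N : Subgroup G) {ι : Type*} [Finite ι]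
    (P : (ι → G ⧸ N) → Prop) :
    Nat.card {t : ι → G // P fun i => t i} = Nat.card {t // P t} * Nat.card N ^ Nat.card ι := by
  let e : (ι → G) ≃ (ι → G ⧸ N) × (ι → N) :=
    (Equiv.piCongrRight fun _ => Subgroup.groupEquivQuotientProdSubgroup).trans
      (Equiv.arrowProdEquivProdArrow ι _ _)
  rw [← Nat.card_fun, ← Nat.card_prod]
  exact Nat.card_congr
    ((e.subtypeEquiv fun _ => Iff.rfl).trans Equiv.prodSubtypeFstEquivSubtypeProd)

section ProjectiveSpecialLinear

variable {F : Type*} [Field F]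

lemma commute_mk_center_SL_two_iff {x y : SL₂ F} :
    Commute (x : SL₂ F ⧸ Subgroup.center (SL₂ F)) y ↔ SignCommute x y := by
  rw [commute_iff_eq, ← QuotientGroup.mk_mul, ← QuotientGroup.mk_mul, eq_comm, QuotientGroup.eq,
    mem_center_SL_two_iff, inv_mul_eq_one, inv_mul_eq_iff_eq_mul, mul_neg_one, SignCommute,
    anticommute_iff_eq, commute_iff_eq, eq_comm (a := y * x)]

variable [Fintype F] [DecidableEq F]

lemma card_commute_PSL_two_mul (h2 : (2 : F) ≠ 0) (s : ℕ) :
    Nat.card {t : Fin s → SL₂ F ⧸ Subgroup.center (SL₂ F) // ∀ i j, Commute (t i) (t j)} * 2 ^ s =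
      #{t : Fin s → SL₂ F | ∀ i j, SignCommute (t i) (t j)} := by
  have hcard := card_subtype_comp_mk (Subgroup.center (SL₂ F)) (ι := Fin s)
    fun t => ∀ i j, Commute (t i) (t j)
  rw [card_center_SL_two h2, Nat.card_fin] at hcard
  rw [← hcard]
  simp only [commute_mk_center_SL_two_iff, Nat.card_eq_fintype_card, Fintype.card_subtype]

lemma card_filter_signCommute_mul (hF : ringChar F ≠ 2) (s : ℕ) :
    24 * (#{t : Fin s → SL₂ F | ∀ i j, SignCommute (t i) (t j)} : ℤ) =
      24 * (#{t : Fin s → SL₂ F | ∀ i j, Commute (t i) (t j)} : ℤ) +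
        Fintype.card F * (Fintype.card F ^ 2 - 1) * (2 ^ s * ((2 ^ s - 1) * (2 ^ s - 2))) := by
  have h2 := Ring.two_ne_zero hF
  have hcommute : ({t | ∀ i j, Commute (t i) (t j)} : Finset (Fin s → SL₂ F)) ⊆
      ({t | ∀ i j, SignCommute (t i) (t j)} : Finset (Fin s → SL₂ F)) :=
    monotone_filter_right _ fun t _ ht i j => Or.inl (ht i j)
  have hnoncommute := card_filter_signCommute_not_commute_mul (neg_one_ne_one_SL_two h2)
    (fun a b hab g => hab.eq_one_or_eq_neg_one h2) s
  simp only [← not_forall, filter_and_not] at hnoncommute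
  rw [cast_card_sdiff hcommute, card_filter_anticommute_pairs hF] at hnoncommute
  linear_combination hnoncommute

end ProjectiveSpecialLinear

theorem stmt_4_general {F : Type*} [Field F] [Fintype F] (hF : ringChar F ≠ 2) {n q r : ℚ}
    (hn : n = Fintype.card F) (hq : q = (n - 1) / 2) (hr : r = (n + 1) / 2) (s : ℕ) :
    (Nat.card {t : Fin s → SL₂ F ⧸ Subgroup.center (SL₂ F) // ∀ i j, Commute (t i) (t j)} : ℚ) =
      (n + 1) * n ^ s + n * r * q ^ s + n * q * r ^ s + (n * q * r / 6) * 4 ^ s -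
        (n * q * r / 2) * 2 ^ s - (n + n * r + n * q - n * q * r / 3) := by
  classical
  have hPSL := congrArg (Nat.cast : ℕ → ℚ) (card_commute_PSL_two_mul (Ring.two_ne_zero hF) s)
  have hsign := congrArg (Int.cast : ℤ → ℚ) (card_filter_signCommute_mul hF s)
  have hcomm := congrArg (Int.cast : ℤ → ℚ) (two_mul_card_filter_commute hF s)
  push_cast [← hn] at hPSL hsign hcomm
  have hq' : n - 1 = 2 * q := by rw [hq]; ring
  have hr' : n + 1 = 2 * r := by rw [hr]; ring
  have hnq : n = 2 * q + 1 := by linear_combination hq'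
  have hrq : r = q + 1 := by rw [hq, hr]; ring
  have h4 : (4 : ℚ) ^ s = 2 ^ s * 2 ^ s := by rw [← mul_pow]; norm_num
  rw [hq', hr', mul_pow, mul_pow, mul_pow] at hcomm
  refine mul_left_cancel₀ (show (24 : ℚ) * 2 ^ s ≠ 0 by positivity) ?_
  rw [hnq] at hsign
  rw [hnq, hrq] at hcomm
  rw [h4, hnq, hrq]
  linear_combination 24 * hPSL + hsign + 12 * hcomm

/-- Let `p > 3` be a prime, `q = (p-1)/2`, `r = (p+1)/2`, and let
`G = PSL(2, F_p)` (the quotient of `SL(2, F_p)` by its center).  Then for every `s ≥ 1`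
the number of commuting `s`-tuples in `G` is
`(p+1)·p^s + pr·q^s + pq·r^s + (pqr/6)·4^s − (pqr/2)·2^s − (p + pr + pq − pqr/3)`. -/
theorem stmt_4 (p : ℕ) (hp : p.Prime) (hp3 : 3 < p) (q r : ℚ)
    (hq : q = ((p : ℚ) - 1) / 2) (hr : r = ((p : ℚ) + 1) / 2)
    (s : ℕ) (hs : 1 ≤ s) :
    (Nat.card {t : Fin s →
        (Matrix.SpecialLinearGroup (Fin 2) (ZMod p) ⧸
          Subgroup.center (Matrix.SpecialLinearGroup (Fin 2) (ZMod p))) //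
        ∀ i j, Commute (t i) (t j)} : ℚ)
      = ((p : ℚ) + 1) * (p : ℚ) ^ s + (p : ℚ) * r * q ^ s + (p : ℚ) * q * r ^ s
        + ((p : ℚ) * q * r / 6) * 4 ^ s - ((p : ℚ) * q * r / 2) * 2 ^ s
        - ((p : ℚ) + (p : ℚ) * r + (p : ℚ) * q - (p : ℚ) * q * r / 3) := by
  have : Fact p.Prime := ⟨hp⟩
  have hchar : ringChar (ZMod p) ≠ 2 := by
    rw [ZMod.ringChar_zmod_n]
    exact (lt_trans (by norm_num) hp3).ne'
  exact stmt_4_general hchar (by rw [ZMod.card]) hq hr s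
end

section
/- Let n = 2k be an even integer with k ≥ 2, and let D_{2n} be the dihedral group of order 2n. Then for every integer s ≥ 1, the number of commuting s-tuples in D_{2n} satisfies |Hom(ℤ^s, D_{2n})| = n^s + k·4^s − k·2^s. -/
/-! Suppose that the elements of `A` commute with each other and that every element outside `A` has
an abelian centralizer. A commuting tuple `t` with an entry outside `A` is then the same thing as a
tuple in the centralizer `C` of some `g ∉ A` that is not contained in `C ∩ A`, and the number of
such `g` for a given `t` is `#(C \ A)`. If `#(C ∩ A) = d` and `#(C \ A) = e` do not depend on `g`,
counting the pairs `(g, t)` in two ways gives the number of commuting tuples.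

For `D_{2n}` take `A` to be the rotations: the centralizer of a reflection consists of the rotations
`r i` with `2 • i = 0` and their products with that reflection, so `d = e = gcd n 2`. -/

open Finset

section CommutingTuples

variable {ι G : Type*} [Fintype ι] [DecidableEq ι] [Mul G] [Fintype G]
  [DecidableRel (Commute : G → G → Prop)]

variable (ι G) in
/-- The families of pairwise commuting elements of `G` indexed by `ι`; for a group `G` and
`ι = Fin s` this is `Hom(ℤ^s, G)`. -/
def commutingTuples : Finset (ι → G) := {t | ∀ i j, Commute (t i) (t j)}

theorem mem_commutingTuples {t : ι → G} :
    t ∈ commutingTuples ι G ↔ ∀ i j, Commute (t i) (t j) :=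
  mem_filter_univ t

theorem piFinset_subset_commutingTuples {A : Finset G} (hA : ∀ x ∈ A, ∀ y ∈ A, Commute x y) :
    Fintype.piFinset (fun _ : ι => A) ⊆ commutingTuples ι G := by
  intro t ht
  rw [Fintype.mem_piFinset] at ht
  exact mem_commutingTuples.2 fun i j => hA _ (ht i) _ (ht j)

variable [DecidableEq G]

theorem card_commutingTuples_sdiff_filter_commute {A : Finset G} {g : G}
    (hg : ∀ x y, Commute x g → Commute y g → Commute x y) :
    #{t ∈ commutingTuples ι G \ Fintype.piFinset fun _ => A | ∀ i, Commute (t i) g} =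
      #{x | Commute x g} ^ Fintype.card ι - #{x ∈ A | Commute x g} ^ Fintype.card ι := by
  have tuples_eq : {t ∈ commutingTuples ι G \ Fintype.piFinset fun _ => A | ∀ i, Commute (t i) g} =
      (Fintype.piFinset fun _ => {x | Commute x g}) \
        Fintype.piFinset fun _ => {x ∈ A | Commute x g} := by
    ext t
    simp only [mem_commutingTuples, mem_filter, mem_sdiff, mem_univ, true_and, Fintype.mem_piFinset,
      forall_and]
    have commute_of_commute_g : (∀ i, Commute (t i) g) → ∀ i j, Commute (t i) (t j) :=
      fun h i j => hg _ _ (h i) (h j)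
    tauto
  rw [tuples_eq, card_sdiff_of_subset (Fintype.piFinset_subset _ _ fun _ =>
    filter_subset_filter _ (subset_univ A))]
  simp only [Fintype.card_piFinset, prod_const, card_univ]

theorem exists_notMem_filter_forall_commute_eq {A : Finset G}
    (hC : ∀ g ∉ A, ∀ x y, Commute x g → Commute y g → Commute x y) {t : ι → G}
    (ht : t ∈ commutingTuples ι G \ Fintype.piFinset fun _ => A) :
    ∃ g ∉ A, ({x ∈ Aᶜ | ∀ i, Commute (t i) x} : Finset G) = {x ∈ Aᶜ | Commute x g} := by
  simp only [mem_commutingTuples, mem_sdiff, Fintype.mem_piFinset, not_forall] at ht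
  obtain ⟨ht, i, hi⟩ := ht
  refine ⟨t i, hi, filter_congr fun x _ => ⟨fun hx => (hx i).symm, fun hx j => ?_⟩⟩
  exact hC (t i) hi _ _ (ht j i) hx

theorem card_compl_mul_eq_card_commutingTuples_sdiff_mul {A : Finset G}
    (hC : ∀ g ∉ A, ∀ x y, Commute x g → Commute y g → Commute x y) {d e : ℕ}
    (hd : ∀ g ∉ A, #{x ∈ A | Commute x g} = d) (he : ∀ g ∉ A, #{x ∈ Aᶜ | Commute x g} = e) :
    #Aᶜ * ((d + e) ^ Fintype.card ι - d ^ Fintype.card ι) =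
      #(commutingTuples ι G \ Fintype.piFinset fun _ => A) * e := by
  refine card_mul_eq_card_mul (fun g t => ∀ i, Commute (t i) g) (fun g hg => ?_) fun t ht => ?_
  · rw [mem_compl] at hg
    have card_centralizer : #{x | Commute x g} = d + e := by
      rw [← union_compl A, filter_union, card_union_of_disjoint
        (disjoint_filter_filter disjoint_compl_right), hd g hg, he g hg]
    rw [bipartiteAbove, card_commutingTuples_sdiff_filter_commute (hC g hg), card_centralizer,
      hd g hg]
  · obtain ⟨g, hg, filter_eq⟩ := exists_notMem_filter_forall_commute_eq hC ht
    rw [bipartiteBelow, filter_eq, he g hg]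

theorem card_commutingTuples_mul {A : Finset G} (hA : ∀ x ∈ A, ∀ y ∈ A, Commute x y)
    (hC : ∀ g ∉ A, ∀ x y, Commute x g → Commute y g → Commute x y) {d e : ℕ}
    (hd : ∀ g ∉ A, #{x ∈ A | Commute x g} = d) (he : ∀ g ∉ A, #{x ∈ Aᶜ | Commute x g} = e) :
    #(commutingTuples ι G) * e =
      #A ^ Fintype.card ι * e + #Aᶜ * ((d + e) ^ Fintype.card ι - d ^ Fintype.card ι) := by
  rw [← card_sdiff_add_card_eq_card (piFinset_subset_commutingTuples hA),
    card_compl_mul_eq_card_commutingTuples_sdiff_mul hC hd he, Fintype.card_piFinset,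
    prod_const, card_univ]
  ring

end CommutingTuples

theorem card_zmod_filter_nsmul_eq_zero (n m : ℕ) [NeZero n] :
    #{i : ZMod n | m • i = 0} = n.gcd m := by
  have card_ker := IsAddCyclic.card_nsmulAddMonoidHom_ker (G := ZMod n) m
  rw [Nat.card_zmod] at card_ker
  rw [← card_ker]
  exact (Nat.subtype_card _ fun i => mem_filter_univ i).symm

section Dihedral

open DihedralGroup

variable {n : ℕ}

theorem commute_r_r (i j : ZMod n) : Commute (r i) (r j) := by
  rw [commute_iff_eq, r_mul_r, r_mul_r, add_comm]

theorem commute_r_sr_iff {i j : ZMod n} : Commute (r i) (sr j) ↔ 2 • i = 0 := by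
  rw [commute_iff_eq, r_mul_sr, sr_mul_r, sr.injEq]
  constructor <;> intro h <;> linear_combination -h

theorem commute_sr_sr_iff {i j : ZMod n} : Commute (sr i) (sr j) ↔ 2 • (i - j) = 0 := by
  rw [commute_iff_eq, sr_mul_sr, sr_mul_sr, r.injEq]
  constructor <;> intro h <;> linear_combination -h

theorem commute_of_commute_sr {c : ZMod n} {g h : DihedralGroup n}
    (hg : Commute g (sr c)) (hh : Commute h (sr c)) : Commute g h := by
  rcases g with i | i <;> rcases h with j | j
  · exact commute_r_r i j
  · rwa [commute_r_sr_iff] at hg ⊢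
  · rw [commute_r_sr_iff] at hh
    exact (commute_r_sr_iff.2 hh).symm
  · rw [commute_sr_sr_iff] at *
    linear_combination hg - hh

variable [NeZero n]

variable (n) in
/-- The rotations of the regular `n`-gon, including the identity. -/
def rotations : Finset (DihedralGroup n) := univ.image r

theorem compl_rotations : (rotations n)ᶜ = univ.image sr := by
  ext (i | i) <;> simp [rotations]

theorem forall_notMem_rotations {p : DihedralGroup n → Prop} :
    (∀ g ∉ rotations n, p g) ↔ ∀ c, p (sr c) := by
  simp only [← mem_compl, compl_rotations, forall_mem_image, mem_univ, true_imp_iff]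

theorem commute_of_mem_rotations {g h : DihedralGroup n} (hg : g ∈ rotations n)
    (hh : h ∈ rotations n) : Commute g h := by
  obtain ⟨i, -, rfl⟩ := mem_image.1 hg
  obtain ⟨j, -, rfl⟩ := mem_image.1 hh
  exact commute_r_r i j

theorem card_rotations : #(rotations n) = n := by
  rw [rotations, card_image_of_injective _ fun _ _ => r.inj, card_univ, ZMod.card]

theorem card_compl_rotations : #(rotations n)ᶜ = n := by
  rw [compl_rotations, card_image_of_injective _ fun _ _ => sr.inj, card_univ, ZMod.card]

open scoped Classical in
theorem card_filter_rotations_commute_sr (c : ZMod n) :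
    #{x ∈ rotations n | Commute x (sr c)} = n.gcd 2 := by
  rw [rotations, filter_image, card_image_of_injective _ fun _ _ => r.inj,
    ← card_zmod_filter_nsmul_eq_zero n 2]
  exact congrArg card (filter_congr fun i _ => commute_r_sr_iff)

open scoped Classical in
theorem card_filter_compl_rotations_commute_sr (c : ZMod n) :
    #{x ∈ (rotations n)ᶜ | Commute x (sr c)} = n.gcd 2 := by
  rw [compl_rotations, filter_image, card_image_of_injective _ fun _ _ => sr.inj,
    ← card_zmod_filter_nsmul_eq_zero n 2]
  refine card_equiv (Equiv.subRight c) fun i => ?_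
  rw [mem_filter_univ, mem_filter_univ]
  exact commute_sr_sr_iff

open scoped Classical in
theorem card_commutingTuples_dihedralGroup (ι : Type*) [Fintype ι] [DecidableEq ι] :
    #(commutingTuples ι (DihedralGroup n)) = n ^ Fintype.card ι +
      n / n.gcd 2 * ((2 * n.gcd 2) ^ Fintype.card ι - n.gcd 2 ^ Fintype.card ι) := by
  have double_count := card_commutingTuples_mul (ι := ι) (A := rotations n)
    (d := n.gcd 2) (e := n.gcd 2) (fun _ hx _ hy => commute_of_mem_rotations hx hy)
    (forall_notMem_rotations.2 fun _ _ _ => commute_of_commute_sr)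
    (forall_notMem_rotations.2 card_filter_rotations_commute_sr)
    (forall_notMem_rotations.2 card_filter_compl_rotations_commute_sr)
  rw [card_rotations, card_compl_rotations, ← two_mul] at double_count
  refine Nat.eq_of_mul_eq_mul_right (Nat.gcd_pos_of_pos_right n two_pos) ?_
  rw [double_count, add_mul, mul_right_comm, Nat.div_mul_cancel (Nat.gcd_dvd_left n 2)]

end Dihedral

theorem stmt_6_general (n : ℕ) [NeZero n] (s : ℕ) :
    (Nat.card {t : Fin s → DihedralGroup n // ∀ i j, Commute (t i) (t j)} : ℤ) =
      (n : ℤ) ^ s + (n / n.gcd 2 : ℕ) * ((2 * n.gcd 2 : ℤ) ^ s - (n.gcd 2 : ℤ) ^ s) := by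
  classical
  have pow_le : n.gcd 2 ^ s ≤ (2 * n.gcd 2) ^ s :=
    Nat.pow_le_pow_left (Nat.le_mul_of_pos_left _ two_pos) s
  rw [Nat.subtype_card (commutingTuples (Fin s) (DihedralGroup n)) fun _ => mem_commutingTuples,
    card_commutingTuples_dihedralGroup, Fintype.card_fin]
  simp only [Nat.cast_add, Nat.cast_mul, Nat.cast_sub pow_le, Nat.cast_pow, Nat.cast_ofNat]

/-- Let `n = 2k` be even with `k ≥ 2`, and let `D_{2n}` be the dihedral
group of order `2n`.  Then for every `s ≥ 1` the number of commuting `s`-tuples in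
`D_{2n}` is `n^s + k·4^s − k·2^s`. -/
theorem stmt_6 (n k : ℕ) (hn : n = 2 * k) (hk : 2 ≤ k) (s : ℕ) (hs : 1 ≤ s) :
    (Nat.card {t : Fin s → DihedralGroup n // ∀ i j, Commute (t i) (t j)} : ℤ)
      = (n : ℤ) ^ s + (k : ℤ) * 4 ^ s - (k : ℤ) * 2 ^ s := by
  have : NeZero n := ⟨by omega⟩
  have gcd_eq : n.gcd 2 = 2 := Nat.gcd_eq_right ⟨k, hn⟩
  have half_eq : n / 2 = k := by omega
  rw [stmt_6_general, gcd_eq, half_eq]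
  norm_num [mul_sub, add_sub_assoc]
end

section
/- Let n ≥ 1 and s ≥ 1 be integers. Then the number of commuting s-tuples in the symmetric group Σ_n satisfies |Hom(ℤ^s, Σ_n)| = Σ_{λ} ( n! / Π_{i=1}^n (i^{a_i} · a_i!) ) · Π_{i=1}^n j_i(ℤ^s)^{a_i}, where the sum runs over all partitions λ = 1^{a_1} 2^{a_2} ⋯ n^{a_n} of n (a_i being the number of parts of λ equal to i), and j_r(ℤ^s) denotes the number of subgroups of ℤ^s of index r. -/
/-!
Commuting `s`-tuples in `Σ_n` are actions of `ℤ ^ s` on `n` points, and the formula holds for any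
group `G` with finitely many actions on `n` points. Mark a point `a` of the action and let `H` be
its stabilizer, of index `k` say: the marked action consists of an equivariant embedding of `G ⧸ H`
in the `n` points, with image the orbit of `a`, and an action on the other `n - k` points. Hence
`n h_n = ∑_k j_k n (n - 1) ⋯ (n - k + 1) h_{n-k}`, where `h_m` is the number of actions on
`m` points and `j_k` the number of subgroups of index `k`. The sums
`∑_λ ∏_i c_i ^ {a_i} / a_i!`, which are the coefficients of `exp (∑_i c_i X ^ i)`, satisfy the
same recurrence as `h_n / n!` when `c_i = j_i / i`, by removing one part from each partition.
-/

open Equiv Finset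

section Counting

theorem card_embedding_eq_descFactorial (α β : Type*) [Finite α] [Finite β] :
    Nat.card (α ↪ β) = (Nat.card β).descFactorial (Nat.card α) := by
  have := Fintype.ofFinite α
  have := Fintype.ofFinite β
  have := Fintype.ofFinite (α ↪ β)
  simp only [Nat.card_eq_fintype_card, Fintype.card_embedding_eq]

theorem card_eq_sum_card_fibers {α β : Type*} [Finite α] {f : α → β} {t : Finset β}
    (hf : ∀ a, f a ∈ t) : Nat.card α = ∑ b ∈ t, Nat.card {a // f a = b} := by
  classical
  have := Fintype.ofFinite α
  simp only [Nat.card_eq_fintype_card, Fintype.card_subtype]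
  exact Finset.card_eq_sum_card_fiberwise fun a _ ↦ hf a

theorem card_subtype_comp_eq_mul {α β : Type*} [Finite α] (f : α → β) (p : β → Prop) {m : ℕ}
    (hm : ∀ b, p b → Nat.card {a // f a = b} = m) :
    Nat.card {a // p (f a)} = Nat.card {b // p b} * m := by
  let e : {a // p (f a)} ≃ {b // p b} × Fin m :=
    (sigmaSubtypeFiberEquivSubtype f fun _ ↦ Iff.rfl).symm.trans <|
      (sigmaCongrRight fun b : {b // p b} ↦ Finite.equivFinOfCardEq (hm b.1 b.2)).trans
        (sigmaEquivProd _ _)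
  rw [Nat.card_congr e, Nat.card_prod, Nat.card_fin]

end Counting

section Actions

variable {G α X : Type*} [Group G]

/-- The stabilizer of the point `a` under the action `φ` of `G` on `α`. Actions are encoded as
homomorphisms to `Perm α` because the number of them is what is counted. -/
def pointStabilizer (φ : G →* Perm α) (a : α) : Subgroup G :=
  (MulAction.stabilizer (Perm α) a).comap φ

@[simp]
theorem mem_pointStabilizer {φ : G →* Perm α} {a : α} {g : G} :
    g ∈ pointStabilizer φ a ↔ φ g a = a :=
  Iff.rfl

/-- Equivariance of a map `f` from a `G`-set `X` to `α`, on which `G` acts by `φ`. -/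
def IsEquivariant [MulAction G X] (f : X → α) (φ : G →* Perm α) : Prop :=
  ∀ g x, φ g (f x) = f (g • x)

theorem IsEquivariant.apply_mem_range_iff [MulAction G X] {f : X → α} {φ : G →* Perm α}
    (h : IsEquivariant f φ) (g : G) (a : α) : φ g a ∈ Set.range f ↔ a ∈ Set.range f := by
  refine ⟨fun ⟨x, hx⟩ ↦ ⟨g⁻¹ • x, ?_⟩, ?_⟩
  · rw [← h, hx, map_inv, Perm.inv_def, symm_apply_apply]
  · rintro ⟨x, rfl⟩
    exact ⟨g • x, (h g x).symm⟩

theorem exists_isEquivariant_quotient (φ : G →* Perm α) (a : α) :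
    ∃ f : (G ⧸ pointStabilizer φ a) ↪ α, IsEquivariant f φ ∧ f (1 : G) = a := by
  let _ : MulAction G α := MulAction.compHom α φ
  exact ⟨⟨MulAction.ofQuotientStabilizer G a, MulAction.injective_ofQuotientStabilizer G a⟩,
    fun g x ↦ (MulAction.ofQuotientStabilizer_smul G a g x).symm,
    (MulAction.ofQuotientStabilizer_mk G a 1).trans (one_smul G a)⟩

theorem index_pointStabilizer_mem_Icc {n : ℕ} (φ : G →* Perm (Fin n)) (a : Fin n) :
    (pointStabilizer φ a).index ∈ Icc 1 n := by
  obtain ⟨f, -⟩ := exists_isEquivariant_quotient φ a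
  have : Finite (G ⧸ pointStabilizer φ a) := .of_injective f f.injective
  have hle := Nat.card_le_card_of_injective f f.injective
  exact mem_Icc.2 ⟨Nat.card_pos, by rwa [Nat.card_fin] at hle⟩

theorem IsEquivariant.apply_coe {H : Subgroup G} {f : G ⧸ H → α} {φ : G →* Perm α}
    (h : IsEquivariant f φ) (g : G) : f g = φ g (f (1 : G)) := by
  rw [h, MulAction.Quotient.smul_coe, smul_eq_mul, mul_one]

theorem IsEquivariant.embedding_ext {H : Subgroup G} {f f' : (G ⧸ H) ↪ α} {φ : G →* Perm α}
    (h : IsEquivariant f φ) (h' : IsEquivariant f' φ) (hone : f (1 : G) = f' (1 : G)) :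
    f = f' := by
  ext x
  induction x using QuotientGroup.induction_on with
  | H g => rw [h.apply_coe, h'.apply_coe, hone]

theorem IsEquivariant.pointStabilizer_eq {H : Subgroup G} {f : (G ⧸ H) ↪ α} {φ : G →* Perm α}
    (h : IsEquivariant f φ) : pointStabilizer φ (f (1 : G)) = H := by
  ext g
  rw [mem_pointStabilizer, ← h.apply_coe, f.injective.eq_iff, eq_comm, QuotientGroup.eq, inv_one,
    one_mul]

/-- An action with a marked point of stabilizer `H` amounts to an action together with an
equivariant embedding of `G ⧸ H`, whose value at the trivial coset is the marked point. -/
noncomputable def markedActionEquiv (H : Subgroup G) :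
    {q : ((G ⧸ H) ↪ α) × (G →* Perm α) // IsEquivariant q.1 q.2} ≃
      {p : (G →* Perm α) × α // pointStabilizer p.1 p.2 = H} :=
  .ofBijective (fun q ↦ ⟨(q.1.2, q.1.1 (1 : G)), q.2.pointStabilizer_eq⟩) <| by
    constructor
    · rintro ⟨⟨f, φ⟩, hf⟩ ⟨⟨f', φ'⟩, hf'⟩ h
      obtain ⟨hφ, hone⟩ : φ = φ' ∧ f (1 : G) = f' (1 : G) :=
        Prod.mk.inj (congrArg Subtype.val h)
      subst hφ
      exact Subtype.ext (Prod.ext (hf.embedding_ext hf' hone) rfl)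
    · rintro ⟨⟨φ, a⟩, rfl⟩
      obtain ⟨f, hf, hone⟩ := exists_isEquivariant_quotient φ a
      exact ⟨⟨(f, φ), hf⟩, Subtype.ext (Prod.ext rfl hone)⟩

/-- The action of `G` on the complement of the image of an equivariant map. -/
def IsEquivariant.complHom [MulAction G X] {f : X → α} {φ : G →* Perm α}
    (h : IsEquivariant f φ) : G →* Perm {a // a ∉ Set.range f} where
  toFun g := (φ g).subtypePerm fun a ↦ (h.apply_mem_range_iff g a).not
  map_one' := by ext; simp
  map_mul' _ _ := by simp only [map_mul, Perm.subtypePerm_mul]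

/-- The action of `G` on the image of an embedding of a `G`-set, transported from that `G`-set. -/
noncomputable def rangeHom (G : Type*) [Group G] [MulAction G X] (f : X ↪ α) :
    G →* Perm {a // a ∈ Set.range f} :=
  (Equiv.ofInjective f f.injective).permCongrHom.toMonoidHom.comp (MulAction.toPermHom G X)

theorem rangeHom_apply [MulAction G X] (f : X ↪ α) (g : G) (x : X) :
    rangeHom G f g ⟨f x, x, rfl⟩ = ⟨f (g • x), g • x, rfl⟩ := by
  have : (Equiv.ofInjective f f.injective).symm ⟨f x, x, rfl⟩ = x :=
    Equiv.ofInjective_symm_apply f.injective x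
  simp [rangeHom, this]

/-- Actions on `α` extending, along an embedding of `X`, the given action on `X` are arbitrary
actions on the complement of the image. -/
noncomputable def isEquivariantEquiv [MulAction G X] (f : X ↪ α) :
    {φ : G →* Perm α // IsEquivariant f φ} ≃ (G →* Perm {a // a ∉ Set.range f}) := by
  classical
  exact
    { toFun φ := φ.2.complHom
      invFun ψ := ⟨(Perm.subtypeCongrHom (· ∈ Set.range f)).comp ((rangeHom G f).prod ψ),
        fun g x ↦ (Perm.subtypeCongr.left_apply _ _ ⟨x, rfl⟩).trans
          (congrArg Subtype.val (rangeHom_apply f g x))⟩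
      left_inv := by
        rintro ⟨φ, hφ⟩
        ext g a
        by_cases ha : a ∈ Set.range f
        · obtain ⟨x, rfl⟩ := ha
          calc _ = (rangeHom G f g ⟨f x, x, rfl⟩ : α) :=
                Perm.subtypeCongr.left_apply _ _ ⟨x, rfl⟩
            _ = φ g (f x) := by rw [rangeHom_apply, hφ]
        · exact Perm.subtypeCongr.right_apply _ _ ha
      right_inv ψ := by
        ext g a
        exact Perm.subtypeCongr.right_apply _ _ a.2 }

theorem card_monoidHom_perm_congr {β : Type*} (e : α ≃ β) :
    Nat.card (G →* Perm α) = Nat.card (G →* Perm β) :=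
  Nat.card_congr (MulEquiv.monoidHomCongrRightEquiv e.permCongrHom)

theorem card_isEquivariant [Finite α] [MulAction G X] (f : X ↪ α) :
    Nat.card {φ : G →* Perm α // IsEquivariant f φ} =
      Nat.card (G →* Perm (Fin (Nat.card α - Nat.card X))) := by
  have hcompl : Nat.card {a // a ∉ Set.range f} = Nat.card α - Nat.card X := by
    rw [← Nat.card_range_of_injective f.injective]
    exact Set.ncard_compl _
  rw [Nat.card_congr (isEquivariantEquiv f),
    card_monoidHom_perm_congr (Finite.equivFinOfCardEq hcompl)]

theorem card_pointStabilizer_eq {n k : ℕ} [Finite (G →* Perm (Fin n))] {H : Subgroup G}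
    (hk : k ≠ 0) (hH : H.index = k) :
    Nat.card {p : (G →* Perm (Fin n)) × Fin n // pointStabilizer p.1 p.2 = H} =
      n.descFactorial k * Nat.card (G →* Perm (Fin (n - k))) := by
  have hcard : Nat.card (G ⧸ H) = k := hH
  have : Finite (G ⧸ H) := Nat.finite_of_card_ne_zero (hcard ▸ hk)
  have := Fintype.ofFinite ((G ⧸ H) ↪ Fin n)
  have hactions (f : (G ⧸ H) ↪ Fin n) :
      Nat.card {φ : G →* Perm (Fin n) // IsEquivariant f φ} =
        Nat.card (G →* Perm (Fin (n - k))) := by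
    rw [card_isEquivariant, Nat.card_fin, hcard]
  rw [← Nat.card_congr (markedActionEquiv H),
    Nat.card_congr (subtypeProdEquivSigmaSubtype
      fun (f : (G ⧸ H) ↪ Fin n) (φ : G →* Perm (Fin n)) ↦ IsEquivariant f φ),
    Nat.card_sigma, sum_congr rfl fun f _ ↦ hactions f, sum_const, card_univ, smul_eq_mul,
    ← Nat.card_eq_fintype_card, card_embedding_eq_descFactorial, Nat.card_fin, hcard]

theorem mul_card_monoidHom_perm (n : ℕ) [Finite (G →* Perm (Fin n))] :
    n * Nat.card (G →* Perm (Fin n)) =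
      ∑ k ∈ Icc 1 n, Nat.card {H : Subgroup G // H.index = k} *
        (n.descFactorial k * Nat.card (G →* Perm (Fin (n - k)))) := by
  calc n * Nat.card (G →* Perm (Fin n)) = Nat.card ((G →* Perm (Fin n)) × Fin n) := by
        rw [Nat.card_prod, Nat.card_fin, mul_comm]
    _ = ∑ k ∈ Icc 1 n,
          Nat.card {p : (G →* Perm (Fin n)) × Fin n // (pointStabilizer p.1 p.2).index = k} :=
        card_eq_sum_card_fibers fun p ↦ index_pointStabilizer_mem_Icc p.1 p.2
    _ = _ := sum_congr rfl fun k hk ↦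
        card_subtype_comp_eq_mul (fun p : (G →* Perm (Fin n)) × Fin n ↦ pointStabilizer p.1 p.2)
          (·.index = k) fun _ hH ↦
            card_pointStabilizer_eq (Nat.one_le_iff_ne_zero.1 (mem_Icc.1 hk).1) hH

theorem finite_monoidHom_perm_of_le {m n : ℕ} (h : m ≤ n) [Finite (G →* Perm (Fin n))] :
    Finite (G →* Perm (Fin m)) :=
  .of_injective (Perm.viaEmbeddingHom (Fin.castLEEmb h)).comp fun _ _ ↦
    (MonoidHom.cancel_left (Perm.viaEmbeddingHom_injective _)).1

end Actions

section Partitions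

theorem partition_toFinset_parts_subset_Icc {n : ℕ} (p : n.Partition) :
    p.parts.toFinset ⊆ Icc 1 n := fun _ hi ↦
  have hi := Multiset.mem_toFinset.1 hi
  mem_Icc.2 ⟨p.parts_pos hi, p.le_of_mem_parts hi⟩

theorem partition_sum_count_mul {n : ℕ} (p : n.Partition) :
    ∑ k ∈ Icc 1 n, p.parts.count k * k = n := by
  conv_rhs => rw [← p.parts_sum, sum_multiset_count_of_subset _ _
    (partition_toFinset_parts_subset_Icc p)]
  rfl

variable {K : Type*} [Field K]

/-- The term `∏ c_i ^ {a_i} / a_i!` that a multiset with multiplicities `a_i` contributes to the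
expansion of `exp (∑ c_i)`. -/
def expWeight (c : ℕ → K) (m : Multiset ℕ) : K :=
  ∏ i ∈ m.toFinset, c i ^ m.count i / (m.count i).factorial

theorem expWeight_eq_prod_of_subset (c : ℕ → K) {m : Multiset ℕ} {s : Finset ℕ}
    (h : m.toFinset ⊆ s) : expWeight c m = ∏ i ∈ s, c i ^ m.count i / (m.count i).factorial := by
  refine prod_subset h fun i _ hi ↦ ?_
  rw [Multiset.count_eq_zero_of_notMem (mt Multiset.mem_toFinset.2 hi), pow_zero,
    Nat.factorial_zero, Nat.cast_one, div_one]

theorem count_mul_expWeight_cons [CharZero K] (c : ℕ → K) (k : ℕ) (m : Multiset ℕ) :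
    (k ::ₘ m).count k * expWeight c (k ::ₘ m) = c k * expWeight c m := by
  have hk : k ∈ insert k m.toFinset := mem_insert_self _ _
  have hrest : ∏ i ∈ (insert k m.toFinset).erase k,
        c i ^ (k ::ₘ m).count i / ((k ::ₘ m).count i).factorial =
      ∏ i ∈ (insert k m.toFinset).erase k, c i ^ m.count i / (m.count i).factorial :=
    prod_congr rfl fun i hi ↦ by rw [Multiset.count_cons_of_ne (ne_of_mem_erase hi)]
  have hcount : (m.count k + 1 : K) ≠ 0 := Nat.cast_add_one_ne_zero _
  have hfactorial : ((m.count k).factorial : K) ≠ 0 := Nat.cast_ne_zero.2 (Nat.factorial_ne_zero _)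
  rw [expWeight_eq_prod_of_subset c (Multiset.toFinset_cons k m).subset,
    expWeight_eq_prod_of_subset c (subset_insert k _), ← mul_prod_erase _ _ hk,
    ← mul_prod_erase _ _ hk, hrest, Multiset.count_cons_self, Nat.factorial_succ, pow_succ]
  push_cast
  field_simp

theorem sum_count_mul_expWeight [CharZero K] (c : ℕ → K) {n k : ℕ} (hk : 1 ≤ k) (hkn : k ≤ n) :
    ∑ p : n.Partition, p.parts.count k * expWeight c p.parts =
      c k * ∑ p : (n - k).Partition, expWeight c p.parts := by
  calc ∑ p : n.Partition, p.parts.count k * expWeight c p.parts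
      = ∑ p : n.Partition with k ∈ p.parts, p.parts.count k * expWeight c p.parts := by
        refine (sum_filter_of_ne fun p _ hp ↦ ?_).symm
        contrapose! hp
        rw [Multiset.count_eq_zero_of_notMem hp, Nat.cast_zero, zero_mul]
    _ = ∑ p : {p : n.Partition // k ∈ p.parts}, p.1.parts.count k * expWeight c p.1.parts :=
        sum_subtype _ (by simp) _
    _ = ∑ p : (n - k).Partition, (k ::ₘ p.parts).count k * expWeight c (k ::ₘ p.parts) := by
        rw [← (Nat.Partition.partitionWithPartEquiv hk hkn).symm.sum_comp]
        simp only [Nat.Partition.partitionWithPartEquiv_symm_apply_parts]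
    _ = c k * ∑ p : (n - k).Partition, expWeight c p.parts := by
        simp only [count_mul_expWeight_cons, mul_sum]

theorem mul_sum_expWeight [CharZero K] (c : ℕ → K) (n : ℕ) :
    n * ∑ p : n.Partition, expWeight c p.parts =
      ∑ k ∈ Icc 1 n, k * c k * ∑ p : (n - k).Partition, expWeight c p.parts := by
  calc n * ∑ p : n.Partition, expWeight c p.parts
      = ∑ p : n.Partition, ∑ k ∈ Icc 1 n, k * (p.parts.count k * expWeight c p.parts) := by
        rw [mul_sum]
        refine sum_congr rfl fun p _ ↦ ?_
        have hn : (n : K) = ∑ k ∈ Icc 1 n, (p.parts.count k * k : K) :=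
          mod_cast (partition_sum_count_mul p).symm
        rw [hn, sum_mul]
        exact sum_congr rfl fun k _ ↦ by ring
    _ = ∑ k ∈ Icc 1 n, k * ∑ p : n.Partition, p.parts.count k * expWeight c p.parts := by
        rw [sum_comm]
        simp only [mul_sum]
    _ = _ := sum_congr rfl fun k hk ↦ by
        rw [sum_count_mul_expWeight c (mem_Icc.1 hk).1 (mem_Icc.1 hk).2, mul_assoc]

theorem eq_sum_expWeight_of_recurrence [CharZero K] {a c : ℕ → K} {n : ℕ} (h₀ : a 0 = 1)
    (h : ∀ m ≤ n, m * a m = ∑ k ∈ Icc 1 m, k * c k * a (m - k)) :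
    a n = ∑ p : n.Partition, expWeight c p.parts := by
  induction n using Nat.strong_induction_on with
  | _ n ih =>
    obtain rfl | hn := eq_or_ne n 0
    · simp [h₀, expWeight]
    · refine mul_left_cancel₀ (Nat.cast_ne_zero.2 hn : (n : K) ≠ 0) ?_
      rw [h n le_rfl, mul_sum_expWeight]
      refine sum_congr rfl fun k hk ↦ ?_
      have hlt : n - k < n := by have := mem_Icc.1 hk; lia
      rw [ih (n - k) hlt fun m hm ↦ h m (hm.trans hlt.le)]

end Partitions

section ExponentialFormula

variable {G : Type*} [Group G]

theorem mul_card_monoidHom_perm_div_factorial (n : ℕ) [Finite (G →* Perm (Fin n))] :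
    (n * (Nat.card (G →* Perm (Fin n)) / n.factorial) : ℚ) =
      ∑ k ∈ Icc 1 n, k * (Nat.card {H : Subgroup G // H.index = k} / k : ℚ) *
        (Nat.card (G →* Perm (Fin (n - k))) / (n - k).factorial) := by
  rw [← mul_div_assoc, ← Nat.cast_mul, mul_card_monoidHom_perm, Nat.cast_sum, sum_div]
  refine sum_congr rfl fun k hk ↦ ?_
  obtain ⟨hk, hkn⟩ := mem_Icc.1 hk
  have hk₀ : (k : ℚ) ≠ 0 := by positivity
  have hdesc : (n.descFactorial k : ℚ) ≠ 0 :=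
    Nat.cast_ne_zero.2 (Nat.descFactorial_pos.2 hkn).ne'
  rw [← Nat.factorial_mul_descFactorial hkn]
  push_cast
  field_simp

theorem card_monoidHom_perm_div_factorial (n : ℕ) [Finite (G →* Perm (Fin n))] :
    (Nat.card (G →* Perm (Fin n)) / n.factorial : ℚ) =
      ∑ p : n.Partition,
        expWeight (fun i ↦ (Nat.card {H : Subgroup G // H.index = i} / i : ℚ)) p.parts := by
  refine eq_sum_expWeight_of_recurrence 
    (a := fun m ↦ (Nat.card (G →* Perm (Fin m)) / m.factorial : ℚ)) ?_ fun m hm ↦ ?_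
  · have : Unique (G →* Perm (Fin 0)) := ⟨⟨1⟩, fun _ ↦ by ext _ x; exact x.elim0⟩
    simp
  · have := finite_monoidHom_perm_of_le (G := G) hm
    exact mul_card_monoidHom_perm_div_factorial m

theorem stmt_9_general (n : ℕ) [Finite (G →* Perm (Fin n))] (j : ℕ → ℕ)
    (hj : ∀ r, j r = Nat.card {H : Subgroup G // H.index = r}) :
    (Nat.card (G →* Perm (Fin n)) : ℚ) =
      ∑ lam : n.Partition,
        ((n.factorial : ℚ) /
            ∏ i ∈ Icc 1 n, ((i : ℚ) ^ lam.parts.count i * (lam.parts.count i).factorial)) *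
          ∏ i ∈ Icc 1 n, (j i : ℚ) ^ lam.parts.count i := by
  have hfactorial : (n.factorial : ℚ) ≠ 0 := by positivity
  rw [(div_eq_iff hfactorial).1 (card_monoidHom_perm_div_factorial n), sum_mul]
  refine sum_congr rfl fun lam _ ↦ ?_
  rw [expWeight_eq_prod_of_subset _ (partition_toFinset_parts_subset_Icc lam), div_mul_eq_mul_div,
    mul_div_assoc, ← prod_div_distrib, mul_comm]
  simp only [hj, div_pow, div_div]

end ExponentialFormula

/-- Homomorphisms from `ℤ ^ ι` to `M`, given by the images of the standard basis. -/
noncomputable def commutingTuplesEquiv (ι M : Type*) [Fintype ι] [DecidableEq ι] [Group M] :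
    {t : ι → M // ∀ i j, Commute (t i) (t j)} ≃ (Multiplicative (ι → ℤ) →* M) :=
  ((subtypeEquiv (piCongrRight fun _ ↦ zpowersHom M) fun t ↦ by
      refine ⟨fun h i j _ x y ↦ ?_, fun h i j ↦ ?_⟩
      · simpa using (h i j).zpow_zpow _ _
      · obtain rfl | hij := eq_or_ne i j
        · exact Commute.refl _
        · simpa using h hij (.ofAdd 1) (.ofAdd 1)).trans
    MonoidHom.noncommPiCoprodEquiv).trans
    (MulEquiv.monoidHomCongrLeftEquiv (MulEquiv.piMultiplicative fun _ : ι ↦ ℤ).symm)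

theorem card_addSubgroup_index_eq (A : Type*) [AddGroup A] (r : ℕ) :
    Nat.card {H : AddSubgroup A // H.index = r} =
      Nat.card {H : Subgroup (Multiplicative A) // H.index = r} :=
  Nat.card_congr (subtypeEquiv AddSubgroup.toSubgroup.toEquiv fun H ↦ by
    rw [← AddSubgroup.index_toSubgroup]; rfl)

/-- For `n, s ≥ 1`, the number of commuting `s`-tuples in the symmetric
group `Σ_n` is `∑_λ (n!/∏_{i=1}^n i^{a_i}·a_i!) · ∏_{i=1}^n j_i(ℤ^s)^{a_i}`, the sum
running over all partitions `λ = 1^{a_1}⋯n^{a_n}` of `n` (`a_i` the multiplicity of the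
part `i`), where `j_r(ℤ^s)` is the number of subgroups of `ℤ^s` of index `r`. -/
theorem stmt_9 (n s : ℕ) (hn : 1 ≤ n) (hs : 1 ≤ s)
    (j : ℕ → ℕ)
    (hj : ∀ r : ℕ, j r = Nat.card {H : AddSubgroup (Fin s → ℤ) // H.index = r}) :
    (Nat.card {t : Fin s → Equiv.Perm (Fin n) // ∀ i j, Commute (t i) (t j)} : ℚ)
      = ∑ lam : Nat.Partition n,
          ((n.factorial : ℚ) /
              ∏ i ∈ Finset.Icc 1 n,
                ((i : ℚ) ^ (lam.parts.count i) * ((lam.parts.count i).factorial : ℚ)))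
            * ∏ i ∈ Finset.Icc 1 n, (j i : ℚ) ^ (lam.parts.count i) := by
  let e := commutingTuplesEquiv (Fin s) (Perm (Fin n))
  have : Finite (Multiplicative (Fin s → ℤ) →* Perm (Fin n)) := .of_equiv _ e
  rw [Nat.card_congr e]
  exact stmt_9_general n j fun r ↦ (hj r).trans (card_addSubgroup_index_eq _ r)
end

section
/- Let K be a finitely generated group and G a finite group. Then |Hom(K × ℤ, G)| = |G| · |Hom(K, G)/G|, where Hom(K × ℤ, G) is the (finite) set of group homomorphisms from K × ℤ to G, and Hom(K, G)/G is the set of orbits of the conjugation action of G on the set of homomorphisms from K to G (g · φ is the homomorphism k ↦ g φ(k) g⁻¹). -/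
/-!
A homomorphism `K × ℤ →* G` is a pair `(g, φ)` in which `g : G` commutes with the image of
`φ : K →* G`, that is, in which `φ` is fixed by conjugation by `g`. By the bijective form of
Burnside's lemma, `Σ g, {φ | g • φ = φ}` is in bijection with the product of `G` and the set of
orbits.
-/

/-- The universal property of the product in the noncommutative setting: a homomorphism out of
`M × N` amounts to a pair of homomorphisms out of `M` and `N` with commuting images. -/
def monoidHomProdEquiv (M N P : Type*) [MulOneClass M] [MulOneClass N] [Monoid P] :
    (M × N →* P) ≃ {p : (M →* P) × (N →* P) // ∀ m n, Commute (p.1 m) (p.2 n)} where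
  toFun f := ⟨(f.comp (.inl M N), f.comp (.inr M N)),
    fun m n => (MonoidHom.commute_inl_inr m n).map f⟩
  invFun p := p.1.1.noncommCoprod p.1.2 p.2
  left_inv f := f.noncommCoprod_unique
  right_inv _ := Subtype.ext <|
    Prod.ext (MonoidHom.noncommCoprod_comp_inl ..) (MonoidHom.noncommCoprod_comp_inr ..)

theorem forall_commute_zpowersHom_iff {G : Type*} [Group G] {a g : G} :
    (∀ n, Commute a (zpowersHom G g n)) ↔ Commute a g where
  mp h := by simpa only [zpowersHom_apply, toAdd_ofAdd, zpow_one] using h (.ofAdd 1)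
  mpr h n := h.zpow_right n.toAdd

section Conjugation

variable (K G : Type*) [MulOneClass K] [Group G]

/-- The action of a group `G` on the homomorphisms `K →* G` by conjugation in the codomain. It is
only a local instance, since `K →* G` may carry other actions of `G`. -/
abbrev monoidHomConjMulAction : MulAction G (K →* G) where
  smul g φ := (MulAut.conj g).toMonoidHom.comp φ
  one_smul φ := MonoidHom.ext fun x => DFunLike.congr_fun (map_one MulAut.conj) (φ x)
  mul_smul g h φ := MonoidHom.ext fun x => DFunLike.congr_fun (map_mul MulAut.conj g h) (φ x)

attribute [local instance] monoidHomConjMulAction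

variable {K G}

theorem monoidHom_conj_smul_apply (g : G) (φ : K →* G) (x : K) : (g • φ) x = g * φ x * g⁻¹ :=
  rfl

theorem mem_fixedBy_monoidHom_conj_iff {g : G} {φ : K →* G} :
    φ ∈ MulAction.fixedBy (K →* G) g ↔ ∀ x, Commute (φ x) g := by
  simp only [MulAction.mem_fixedBy, MonoidHom.ext_iff, monoidHom_conj_smul_apply,
    mul_inv_eq_iff_eq_mul, @eq_comm _ (g * _), commute_iff_eq]

theorem mem_orbit_monoidHom_conj_iff {φ ψ : K →* G} :
    ψ ∈ MulAction.orbit G φ ↔ ∃ g : G, ∀ x, ψ x = g * φ x * g⁻¹ := by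
  simp only [MulAction.mem_orbit_iff, MonoidHom.ext_iff, monoidHom_conj_smul_apply, eq_comm]

variable (K G)

/-- A homomorphism out of `K × ℤ` amounts to an element of `G`, the image of the generator of `ℤ`,
together with a homomorphism out of `K` fixed under conjugation by that element. -/
def monoidHomProdIntEquivSigmaFixedBy :
    (K × Multiplicative ℤ →* G) ≃ Σ g : G, MulAction.fixedBy (K →* G) g :=
  calc
    (K × Multiplicative ℤ →* G)
      ≃ {p : (K →* G) × (Multiplicative ℤ →* G) // ∀ x n, Commute (p.1 x) (p.2 n)} :=
        monoidHomProdEquiv ..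
    _ ≃ {p : G × (K →* G) // p.2 ∈ MulAction.fixedBy (K →* G) p.1} :=
        .symm <| ((Equiv.prodComm ..).trans (.prodCongr (.refl _) (zpowersHom G))).subtypeEquiv
          fun _ => mem_fixedBy_monoidHom_conj_iff.trans <|
            forall_congr' fun _ => forall_commute_zpowersHom_iff.symm
    _ ≃ Σ g : G, MulAction.fixedBy (K →* G) g :=
        Equiv.subtypeProdEquivSigmaSubtype fun g φ => φ ∈ MulAction.fixedBy (K →* G) g

/-- The orbits of the conjugation action, as a quotient by the explicit conjugacy relation. -/
def monoidHomConjOrbitsEquiv :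
    MulAction.orbitRel.Quotient G (K →* G) ≃
      Quot fun φ ψ : K →* G => ∃ g : G, ∀ x, ψ x = g * φ x * g⁻¹ :=
  Quot.congrRight fun _ _ =>
    (Setoid.comm' (MulAction.orbitRel G (K →* G))).trans mem_orbit_monoidHom_conj_iff

/-- The bijection between homomorphisms `K × ℤ →* G` and pairs of an element of `G` and a conjugacy
class of homomorphisms `K →* G`. It depends on a choice of representatives of the classes. -/
noncomputable def monoidHomProdIntEquivProdConjOrbits :
    (K × Multiplicative ℤ →* G) ≃
      G × Quot fun φ ψ : K →* G => ∃ g : G, ∀ x, ψ x = g * φ x * g⁻¹ :=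
  calc
    (K × Multiplicative ℤ →* G)
      ≃ Σ g : G, MulAction.fixedBy (K →* G) g := monoidHomProdIntEquivSigmaFixedBy K G
    _ ≃ MulAction.orbitRel.Quotient G (K →* G) × G :=
        MulAction.sigmaFixedByEquivOrbitsProdGroup G (K →* G)
    _ ≃ G × MulAction.orbitRel.Quotient G (K →* G) := Equiv.prodComm ..
    _ ≃ G × Quot fun φ ψ : K →* G => ∃ g : G, ∀ x, ψ x = g * φ x * g⁻¹ :=
        .prodCongr (.refl G) (monoidHomConjOrbitsEquiv K G)

end Conjugation

universe u v

theorem stmt_10_general (K : Type u) (G : Type v) [MulOneClass K] [Group G] :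
    Cardinal.mk (K × Multiplicative ℤ →* G)
      = Cardinal.lift.{u} (Cardinal.mk G) *
        Cardinal.mk (Quot fun φ ψ : K →* G => ∃ g : G, ∀ x, ψ x = g * φ x * g⁻¹) := by
  rw [Cardinal.mk_congr (monoidHomProdIntEquivProdConjOrbits K G), Cardinal.mk_prod,
    Cardinal.lift_umax.{v, u}, Cardinal.lift_id'.{v, max u v}]

/-- Let `K` be a finitely generated group and `G` a finite group.
Then `|Hom(K × ℤ, G)| = |G| · |Hom(K, G)/G|`, where `Hom(K, G)/G` is the set of orbits
of the conjugation action of `G` on `Hom(K, G)`. -/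
theorem stmt_10 (K G : Type*) [Group K] [Group.FG K] [Group G] [Finite G] :
    Nat.card ((K × Multiplicative ℤ) →* G)
      = Nat.card G *
        Nat.card (Quot (fun φ ψ : K →* G => ∃ g : G, ∀ x : K, ψ x = g * φ x * g⁻¹)) := by
  simpa only [Nat.card, Cardinal.toNat_mul, Cardinal.toNat_lift] using
    congrArg Cardinal.toNat (stmt_10_general K G)
end

section
/- Let G be a finite group, H ≤ G a subgroup, and n ≥ 1 an integer. Then k_n(H) ≤ |G:H| · k_n(G) and k_n(G) ≤ |G:H|^n · k_n(H), where k_n(G) is the number of conjugacy classes of commuting n-tuples in G. -/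
/-!
For a finite group `K`, Burnside's lemma applied to the conjugation action of `K` on its commuting
`n`-tuples counts pairs of a tuple and an element centralizing it, that is, commuting
`(n + 1)`-tuples: `|Hom(ℤ^(n+1), K)| = k_n(K) * |K|`. Both inequalities therefore follow from
`|Hom(ℤ^m, H)| ≤ |Hom(ℤ^m, G)| ≤ |G:H|^m * |Hom(ℤ^m, H)|` for `m = n + 1`.

The second of these bounds is proved by induction on `m`, for all pairs `H ≤ G` simultaneously.
A `G`-set has at most as many `G`-orbits as `H`-orbits, so by Burnside's lemma the first entry of a
commuting tuple can be moved into `H` at the cost of a factor `|G:H|`. The remaining entries then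
lie in the centralizer `C` of an element of `H`, and the induction hypothesis applies to
`H ∩ C ≤ C`, whose index is at most `|G:H|`.
-/

open MulAction

section Subgroups

variable {G : Type*} [Group G]

/-- For `h : H`, intersecting with `H` the centralizer of `h` in `G` gives the centralizer of `h`
in `H`. -/
def subgroupOfCentralizerEquiv {H : Subgroup G} (h : H) :
    H.subgroupOf (Subgroup.centralizer {(h : G)}) ≃* Subgroup.centralizer {h} where
  toFun x := ⟨⟨x.1.1, x.2⟩, Subgroup.mem_centralizer_singleton_iff.2
    (Subtype.ext (Subgroup.mem_centralizer_singleton_iff.1 x.1.2))⟩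
  invFun x := ⟨⟨x.1.1, Subgroup.mem_centralizer_singleton_iff.2
    (congrArg Subtype.val (Subgroup.mem_centralizer_singleton_iff.1 x.2))⟩, x.1.2⟩
  left_inv _ := rfl
  right_inv _ := rfl
  map_mul' _ _ := rfl

theorem index_subgroupOf_le (H C : Subgroup G) [H.FiniteIndex] :
    (H.subgroupOf C).index ≤ H.index := by
  have hle := Subgroup.relIndex_le_of_le_right (H := H) (le_top : C ≤ ⊤)
  rw [H.relIndex_top_right] at hle
  exact hle Subgroup.FiniteIndex.index_ne_zero

end Subgroups

section FixedPoints

variable {G : Type*} [Group G] (X : Type*) [MulAction G X]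

theorem card_sigma_fixedBy :
    Nat.card (Σ g : G, fixedBy X g) = Nat.card (orbitRel.Quotient G X) * Nat.card G := by
  rw [Nat.card_congr (sigmaFixedByEquivOrbitsProdGroup G X), Nat.card_prod]

theorem card_orbitRel_quotient_le_subgroup (H : Subgroup G) [Finite (orbitRel.Quotient H X)] :
    Nat.card (orbitRel.Quotient G X) ≤ Nat.card (orbitRel.Quotient H X) :=
  Nat.card_le_card_of_surjective (Quotient.map' id (orbitRel_subgroup_le H))
    (Quotient.ind' fun x ↦ ⟨Quotient.mk'' x, rfl⟩)

theorem card_sigma_fixedBy_le_index_mul_subgroup (H : Subgroup G)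
    [Finite (orbitRel.Quotient H X)] :
    Nat.card (Σ g : G, fixedBy X g) ≤ H.index * Nat.card (Σ h : H, fixedBy X h) := by
  calc Nat.card (Σ g : G, fixedBy X g)
      = Nat.card (orbitRel.Quotient G X) * (Nat.card H * H.index) := by
        rw [card_sigma_fixedBy, H.card_mul_index]
    _ ≤ Nat.card (orbitRel.Quotient H X) * (Nat.card H * H.index) := by
        gcongr
        exact card_orbitRel_quotient_le_subgroup X H
    _ = H.index * Nat.card (Σ h : H, fixedBy X h) := by
        rw [card_sigma_fixedBy]
        ring

end FixedPoints

/-- `Hom(ℤ^n, G)` for `ι = Fin n`, encoded as the families indexed by `ι` of pairwise commuting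
elements of `G`. -/
abbrev CommutingTuple (ι G : Type*) [Mul G] : Type _ :=
  {f : ι → G // ∀ i j, Commute (f i) (f j)}

namespace CommutingTuple

section Action

variable {ι G : Type*} [Group G]

/-- Simultaneous conjugation of commuting tuples. -/
instance : MulAction G (CommutingTuple ι G) where
  smul g t := ⟨fun i ↦ g * t.1 i * g⁻¹, fun i j ↦ SemiconjBy.conj_iff.2 (t.2 i j)⟩
  one_smul t := Subtype.ext (funext fun i ↦ show 1 * t.1 i * 1⁻¹ = t.1 i by group)
  mul_smul g h t := Subtype.ext (funext fun i ↦
    show g * h * t.1 i * (g * h)⁻¹ = g * (h * t.1 i * h⁻¹) * g⁻¹ by group)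

theorem smul_eq_iff {g : G} {t t' : CommutingTuple ι G} :
    g • t = t' ↔ ∀ i, t'.1 i = g * t.1 i * g⁻¹ := by
  rw [eq_comm, Subtype.ext_iff, funext_iff]
  rfl

theorem mem_fixedBy_iff {g : G} {t : CommutingTuple ι G} :
    t ∈ fixedBy (CommutingTuple ι G) g ↔ ∀ i, Commute g (t.1 i) := by
  rw [mem_fixedBy, smul_eq_iff]
  exact forall_congr' fun i ↦ eq_mul_inv_iff_mul_eq.trans eq_comm

/-- The first entry of a commuting `(n + 1)`-tuple is an element fixing the commuting `n`-tuple
formed by the other entries. -/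
def succEquivSigmaFixedBy (n : ℕ) :
    CommutingTuple (Fin (n + 1)) G ≃ Σ g : G, fixedBy (CommutingTuple (Fin n) G) g where
  toFun f := ⟨f.1 0, ⟨Fin.tail f.1, fun i j ↦ f.2 i.succ j.succ⟩,
    mem_fixedBy_iff.2 fun i ↦ f.2 0 i.succ⟩
  invFun x := ⟨Fin.cons x.1 x.2.1.1, by
    have hcomm : ∀ i, Commute x.1 (x.2.1.1 i) := mem_fixedBy_iff.1 x.2.2
    refine Fin.cases (Fin.cases (Commute.refl _) hcomm) fun i ↦ ?_
    exact Fin.cases (hcomm i).symm (x.2.1.2 i)⟩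
  left_inv f := Subtype.ext (Fin.cons_self_tail f.1)
  right_inv _ := rfl

/-- The commuting tuples in `G` fixed by `g` are the commuting tuples in the centralizer of `g`. -/
def centralizerEquivFixedBy (g : G) :
    CommutingTuple ι (Subgroup.centralizer {g}) ≃ fixedBy (CommutingTuple ι G) g where
  toFun t := ⟨⟨fun i ↦ t.1 i, fun i j ↦ (t.2 i j).map (Subgroup.subtype _)⟩,
    mem_fixedBy_iff.2 fun i ↦ (Subgroup.mem_centralizer_singleton_iff.1 (t.1 i).2).symm⟩
  invFun t := ⟨fun i ↦ ⟨t.1.1 i,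
      Subgroup.mem_centralizer_singleton_iff.2 (mem_fixedBy_iff.1 t.2 i).symm⟩,
    fun i j ↦ Subtype.ext (t.1.2 i j)⟩
  left_inv _ := rfl
  right_inv _ := rfl

end Action

section Card

theorem card_le_of_injective {ι K L F : Type*} [Finite ι] [Mul K] [Mul L] [Finite L]
    [FunLike F K L] [MulHomClass F K L] (φ : F) (hφ : Function.Injective φ) :
    Nat.card (CommutingTuple ι K) ≤ Nat.card (CommutingTuple ι L) :=
  Nat.card_le_card_of_injective
    (Subtype.map (φ ∘ ·) fun _ hf i j ↦ (hf i j).map φ)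
    (Subtype.map_injective _ hφ.comp_left)

variable {G : Type*} [Group G]

theorem card_le_index_pow_mul_card_subgroup [Finite G] (H : Subgroup G) (n : ℕ) :
    Nat.card (CommutingTuple (Fin n) G) ≤
      H.index ^ n * Nat.card (CommutingTuple (Fin n) H) := by
  induction n generalizing G with
  | zero => simp
  | succ n ih =>
    have card_fixedBy_le (h : H) :
        Nat.card (fixedBy (CommutingTuple (Fin n) G) h) ≤
          H.index ^ n * Nat.card (fixedBy (CommutingTuple (Fin n) H) h) := by
      let C := Subgroup.centralizer {(h : G)}
      calc Nat.card (fixedBy (CommutingTuple (Fin n) G) h)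
          = Nat.card (CommutingTuple (Fin n) C) :=
            (Nat.card_congr (centralizerEquivFixedBy (h : G))).symm
        _ ≤ (H.subgroupOf C).index ^ n * Nat.card (CommutingTuple (Fin n) (H.subgroupOf C)) :=
            ih _
        _ ≤ H.index ^ n * Nat.card (CommutingTuple (Fin n) (Subgroup.centralizer {h})) := by
            gcongr
            · exact index_subgroupOf_le H C
            · exact card_le_of_injective _ (subgroupOfCentralizerEquiv h).injective
        _ = H.index ^ n * Nat.card (fixedBy (CommutingTuple (Fin n) H) h) := by
            rw [Nat.card_congr (centralizerEquivFixedBy h)]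
    have := Fintype.ofFinite H
    calc Nat.card (CommutingTuple (Fin (n + 1)) G)
        = Nat.card (Σ g : G, fixedBy (CommutingTuple (Fin n) G) g) :=
          Nat.card_congr (succEquivSigmaFixedBy n)
      _ ≤ H.index * Nat.card (Σ h : H, fixedBy (CommutingTuple (Fin n) G) h) :=
          card_sigma_fixedBy_le_index_mul_subgroup _ H
      _ ≤ H.index * (H.index ^ n * Nat.card (Σ h : H, fixedBy (CommutingTuple (Fin n) H) h)) := by
          rw [Nat.card_sigma, Nat.card_sigma, Finset.mul_sum _ _ (H.index ^ n)]
          gcongr with h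
          exact card_fixedBy_le h
      _ = H.index ^ (n + 1) * Nat.card (CommutingTuple (Fin (n + 1)) H) := by
          rw [Nat.card_congr (succEquivSigmaFixedBy n), pow_succ', mul_assoc]

end Card

end CommutingTuple

/-- `k_n(G)`, the number of `G`-orbits of commuting `n`-tuples in `G` under simultaneous
conjugation. -/
noncomputable def commutingClassCount (n : ℕ) (G : Type*) [Group G] : ℕ :=
  Nat.card (orbitRel.Quotient G (CommutingTuple (Fin n) G))

section CommutingClassCount

variable {G : Type*} [Group G]

theorem card_quot_conj_eq_commutingClassCount (n : ℕ) :
    Nat.card (Quot (fun t t' : CommutingTuple (Fin n) G =>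
        ∃ g : G, ∀ i, (t' : Fin n → G) i = g * (t : Fin n → G) i * g⁻¹)) =
      commutingClassCount n G :=
  Nat.card_congr <| Quot.congrRight fun _ _ ↦
    (exists_congr fun _ ↦ CommutingTuple.smul_eq_iff.symm).trans (orbitRel G _).comm'

theorem card_commutingTuple_succ (n : ℕ) :
    Nat.card (CommutingTuple (Fin (n + 1)) G) = commutingClassCount n G * Nat.card G := by
  rw [Nat.card_congr (CommutingTuple.succEquivSigmaFixedBy n), card_sigma_fixedBy,
    commutingClassCount]

variable [Finite G] (H : Subgroup G) (n : ℕ)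

theorem commutingClassCount_subgroup_le :
    commutingClassCount n H ≤ H.index * commutingClassCount n G := by
  refine Nat.le_of_mul_le_mul_right ?_ (Nat.card_pos (α := H))
  calc commutingClassCount n H * Nat.card H
      = Nat.card (CommutingTuple (Fin (n + 1)) H) := (card_commutingTuple_succ n).symm
    _ ≤ Nat.card (CommutingTuple (Fin (n + 1)) G) :=
        CommutingTuple.card_le_of_injective H.subtype H.subtype_injective
    _ = H.index * commutingClassCount n G * Nat.card H := by
        rw [card_commutingTuple_succ, ← H.card_mul_index]
        ring

theorem commutingClassCount_le_index_pow_mul_subgroup :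
    commutingClassCount n G ≤ H.index ^ n * commutingClassCount n H := by
  refine Nat.le_of_mul_le_mul_right ?_ (Nat.card_pos (α := G))
  calc commutingClassCount n G * Nat.card G
      = Nat.card (CommutingTuple (Fin (n + 1)) G) := (card_commutingTuple_succ n).symm
    _ ≤ H.index ^ (n + 1) * Nat.card (CommutingTuple (Fin (n + 1)) H) :=
        CommutingTuple.card_le_index_pow_mul_card_subgroup H (n + 1)
    _ = H.index ^ n * commutingClassCount n H * Nat.card G := by
        rw [card_commutingTuple_succ, ← H.card_mul_index]
        ring

end CommutingClassCount

/-- Let `G` be a finite group, `H ≤ G`, and `n ≥ 1`.  Then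
`k_n(H) ≤ |G:H|·k_n(G)` and `k_n(G) ≤ |G:H|^n·k_n(H)`, where `k_n(G)` denotes the
number of conjugacy classes of commuting `n`-tuples in `G`. -/
theorem stmt_13 {G : Type*} [Group G] [Fintype G] (H : Subgroup G) (n : ℕ) (hn : 1 ≤ n) :
    Nat.card (Quot (fun t t' : {f : Fin n → ↥H // ∀ i j, Commute (f i) (f j)} =>
        ∃ h : ↥H, ∀ i, (t' : Fin n → ↥H) i = h * (t : Fin n → ↥H) i * h⁻¹))
      ≤ H.index *
        Nat.card (Quot (fun t t' : {f : Fin n → G // ∀ i j, Commute (f i) (f j)} =>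
          ∃ g : G, ∀ i, (t' : Fin n → G) i = g * (t : Fin n → G) i * g⁻¹))
    ∧ Nat.card (Quot (fun t t' : {f : Fin n → G // ∀ i j, Commute (f i) (f j)} =>
        ∃ g : G, ∀ i, (t' : Fin n → G) i = g * (t : Fin n → G) i * g⁻¹))
      ≤ H.index ^ n *
        Nat.card (Quot (fun t t' : {f : Fin n → ↥H // ∀ i j, Commute (f i) (f j)} =>
          ∃ h : ↥H, ∀ i, (t' : Fin n → ↥H) i = h * (t : Fin n → ↥H) i * h⁻¹)) := by
  simp only [card_quot_conj_eq_commutingClassCount]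
  exact ⟨commutingClassCount_subgroup_le H n, commutingClassCount_le_index_pow_mul_subgroup H n⟩
end
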